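/- Let a be an irrational algebraic number of degree ≥ 2 with continued fraction convergents p_n/q_n and partial quotients b_n. Then for every ε > 0, b_{n+1} ≤ C_ε · q_n^ε for some constant C_ε > 0 and all n. -/

import Mathlib

noncomputable section
open MvPolynomial

/-- Translation of a polynomial by a point. -/
def rsh {n : ℕ} {R : Type*} [CommRing R] (ξ : Fin n → R) :
    MvPolynomial (Fin n) R →ₐ[R] MvPolynomial (Fin n) R :=
  aeval (fun j => X j + C (ξ j))

theorem rsh_monomial_coeff {n : ℕ} {R : Type*} [CommRing R] (ξ : Fin n → R)
    (I J : Fin n →₀ ℕ) (c : R) :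
    coeff I (rsh ξ (monomial J c)) = c * ∏ j, ((J j).choose (I j) : R) * ξ j ^ (J j - I j) := by
  classical
  have h1 : rsh ξ (monomial J c) = C c * ∏ j, (X j + C (ξ j)) ^ (J j) := by
    rw [rsh, aeval_monomial, Finsupp.prod_fintype _ _ (by simp)]
    rfl
  have h2 : ∀ j : Fin n, (X j + C (ξ j) : MvPolynomial (Fin n) R) ^ (J j)
      = ∑ i ∈ Finset.range (J j + 1), C (((J j).choose i : R) * ξ j ^ (J j - i)) * X j ^ i := by
    intro j
    rw [add_pow]
    refine Finset.sum_congr rfl fun i _ => ?_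
    simp only [map_mul, map_pow, map_natCast]
    ring
  rw [h1, coeff_C_mul]
  congr 1
  simp_rw [h2]
  rw [Finset.prod_univ_sum, coeff_sum]
  have h3 : ∀ f : Fin n → ℕ, coeff I (∏ j, (C (((J j).choose (f j) : R) * ξ j ^ (J j - f j))
      * X j ^ (f j) : MvPolynomial (Fin n) R)) =
      if f = I then ∏ j, ((J j).choose (f j) : R) * ξ j ^ (J j - f j) else 0 := by
    intro f
    rw [Finset.prod_mul_distrib, ← map_prod, coeff_C_mul]
    have : (∏ j, (X j : MvPolynomial (Fin n) R) ^ f j) = monomial (Finsupp.equivFunOnFinite.symm f) 1 := by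
      rw [monomial_eq, Finsupp.prod_fintype _ _ (by simp)]
      simp
    rw [this, coeff_monomial]
    by_cases hf : f = I
    · rw [if_pos hf, if_pos, mul_one]
      ext j; simp [hf]
    · rw [if_neg hf, if_neg, mul_zero]
      intro h; apply hf; rw [← h]; rfl
  simp_rw [h3]
  rw [Finset.sum_ite_eq']
  split_ifs with h
  · rfl
  · symm
    simp only [Fintype.mem_piFinset, Finset.mem_range, not_forall, not_lt] at h
    obtain ⟨j, hj⟩ := h
    refine Finset.prod_eq_zero (Finset.mem_univ j) ?_
    rw [Nat.choose_eq_zero_of_lt (by omega)]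
    simp

/-- Hasse derivative. -/
def rhd {n : ℕ} {R : Type*} [CommRing R] (I : Fin n →₀ ℕ) :
    MvPolynomial (Fin n) R →ₗ[R] MvPolynomial (Fin n) R where
  toFun P := coeff I (rsh (fun j => (X j : MvPolynomial (Fin n) R)) (map C P))
  map_add' P Q := by simp
  map_smul' c P := by
    rw [smul_eq_C_mul, map_mul, map_mul, map_C, smul_eq_C_mul]
    have : rsh (fun j => (X j : MvPolynomial (Fin n) R)) (C (C c)) = C (C c) := by
      simp [rsh]
    rw [this, coeff_C_mul]; rfl

theorem rhd_monomial {n : ℕ} {R : Type*} [CommRing R] (I J : Fin n →₀ ℕ) (c : R) :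
    rhd I (monomial J c) = monomial (J - I) (c * ∏ j, ((J j).choose (I j) : R)) := by
  show coeff I (rsh (fun j => (X j : MvPolynomial (Fin n) R)) (map C (monomial J c))) = _
  rw [map_monomial, rsh_monomial_coeff, Finset.prod_mul_distrib]
  rw [monomial_eq, Finsupp.prod_fintype _ _ (by simp)]
  simp [mul_assoc]

theorem rhd_coeff {n : ℕ} {R : Type*} [CommRing R] (I K : Fin n →₀ ℕ)
    (P : MvPolynomial (Fin n) R) :
    coeff K (rhd I P) = coeff (K + I) P * ∏ j, ((K j + I j).choose (I j) : R) := by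
  classical
  induction P using MvPolynomial.induction_on' with
  | monomial J c =>
    rw [rhd_monomial, coeff_monomial, coeff_monomial]
    by_cases h : J = K + I
    · rw [if_pos h, if_pos (by rw [h]; ext; simp)]
      subst h; simp
    · rw [if_neg h, zero_mul]
      split_ifs with h2
      · have : ∃ j, J j < I j := by
          by_contra hc
          push Not at hc
          apply h
          ext j
          have := hc j
          rw [← h2]; simp; omega
        obtain ⟨j, hj⟩ := this
        rw [Finset.prod_eq_zero (Finset.mem_univ j), mul_zero]
        rw [Nat.choose_eq_zero_of_lt hj]; simp
      · rfl
  | add p q hp hq => rw [map_add, coeff_add, coeff_add, hp, hq]; ring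

theorem rhd_map {n : ℕ} {R S : Type*} [CommRing R] [CommRing S] (f : R →+* S)
    (I : Fin n →₀ ℕ) (P : MvPolynomial (Fin n) R) :
    map f (rhd I P) = rhd I (map f P) := by
  ext K
  rw [coeff_map, rhd_coeff, rhd_coeff, coeff_map]
  simp

theorem rsh_rhd {n : ℕ} {R : Type*} [CommRing R] (ξ : Fin n → R)
    (I : Fin n →₀ ℕ) (P : MvPolynomial (Fin n) R) :
    rsh ξ (rhd I P) = rhd I (rsh ξ P) := by
  show rsh ξ (coeff I (rsh (fun j => (X j : MvPolynomial (Fin n) R)) (map C P))) =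
    coeff I (rsh (fun j => (X j : MvPolynomial (Fin n) R)) (map C (rsh ξ P)))
  have := coeff_map (rsh ξ : MvPolynomial (Fin n) R →ₐ[R] _).toRingHom
    (rsh (fun j => (X j : MvPolynomial (Fin n) R)) (map C P)) I
  refine this.symm.trans ?_
  clear this
  congr 1
  induction P using MvPolynomial.induction_on with
  | C a => simp [rsh]
  | add p q hp hq => simp only [map_add, hp, hq]
  | mul_X p j hp =>
    have hX : map (rsh ξ : MvPolynomial (Fin n) R →ₐ[R] _).toRingHom
        (rsh (fun j => (X j : MvPolynomial (Fin n) R)) (map C (X j : MvPolynomial (Fin n) R)))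
        = rsh (fun j => (X j : MvPolynomial (Fin n) R)) (map C (rsh ξ (X j))) := by
      simp [rsh]
      ring
    simp only [map_mul, hp]
    rw [hX]

theorem eval_rhd {n : ℕ} {R : Type*} [CommRing R] (ξ : Fin n → R)
    (I : Fin n →₀ ℕ) (P : MvPolynomial (Fin n) R) :
    eval ξ (rhd I P) = coeff I (rsh ξ P) := by
  induction P using MvPolynomial.induction_on' with
  | monomial J c =>
    rw [rhd_monomial, rsh_monomial_coeff, eval_monomial, Finsupp.prod_fintype _ _ (by simp),
      Finset.prod_mul_distrib]
    simp [mul_assoc]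
  | add p q hp hq => simp [hp, hq]

theorem eval_rsh {n : ℕ} {R : Type*} [CommRing R] (ξ η : Fin n → R)
    (P : MvPolynomial (Fin n) R) :
    eval (fun j => η j - ξ j) (rsh ξ P) = eval η P := by
  induction P using MvPolynomial.induction_on with
  | C a => simp [rsh]
  | add p q hp hq => simp [hp, hq]
  | mul_X p j hp => rw [map_mul, map_mul, hp, map_mul]; simp [rsh]

theorem rsh_inj {n : ℕ} {R : Type*} [CommRing R] (ξ : Fin n → R)
    (P : MvPolynomial (Fin n) R) (h : rsh ξ P = 0) : P = 0 := by
  have : rsh (-ξ) (rsh ξ P) = P := by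
    clear h
    induction P using MvPolynomial.induction_on with
    | C a => simp [rsh]
    | add p q hp hq => simp [hp, hq]
    | mul_X p j hp => rw [map_mul, map_mul, hp]; simp [rsh]
  rw [← this, h, map_zero]

/-- Sum of absolute values of the coefficients. -/
def rlen {n : ℕ} (P : MvPolynomial (Fin n) ℝ) : ℝ := ∑ K ∈ P.support, |coeff K P|

theorem rlen_eq {n : ℕ} (P : MvPolynomial (Fin n) ℝ) (S : Finset (Fin n →₀ ℕ))
    (h : P.support ⊆ S) : rlen P = ∑ K ∈ S, |coeff K P| := by
  refine Finset.sum_subset h fun K _ hK => ?_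
  rw [notMem_support_iff.1 hK, abs_zero]

theorem rlen_nonneg {n : ℕ} (P : MvPolynomial (Fin n) ℝ) : 0 ≤ rlen P :=
  Finset.sum_nonneg fun _ _ => abs_nonneg _

theorem rlen_zero {n : ℕ} : rlen (0 : MvPolynomial (Fin n) ℝ) = 0 := by simp [rlen]

theorem coeff_le_rlen {n : ℕ} (P : MvPolynomial (Fin n) ℝ) (K : Fin n →₀ ℕ) :
    |coeff K P| ≤ rlen P := by
  by_cases h : K ∈ P.support
  · exact Finset.single_le_sum (f := fun K => |coeff K P|) (fun _ _ => abs_nonneg _) h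
  · rw [notMem_support_iff.1 h, abs_zero]; exact rlen_nonneg P

theorem rlen_add {n : ℕ} (P Q : MvPolynomial (Fin n) ℝ) : rlen (P + Q) ≤ rlen P + rlen Q := by
  classical
  rw [rlen_eq (P + Q) (P.support ∪ Q.support) support_add,
    rlen_eq P (P.support ∪ Q.support) Finset.subset_union_left,
    rlen_eq Q (P.support ∪ Q.support) Finset.subset_union_right, ← Finset.sum_add_distrib]
  exact Finset.sum_le_sum fun K _ => by rw [coeff_add]; exact abs_add_le _ _

theorem rlen_sum {n : ℕ} {ι : Type*} (S : Finset ι) (f : ι → MvPolynomial (Fin n) ℝ) :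
    rlen (∑ i ∈ S, f i) ≤ ∑ i ∈ S, rlen (f i) := by
  classical
  induction S using Finset.induction_on with
  | empty => simp [rlen_zero]
  | insert a s ha ih =>
    rw [Finset.sum_insert ha, Finset.sum_insert ha]
    exact (rlen_add _ _).trans (by linarith)

theorem rlen_monomial {n : ℕ} (K : Fin n →₀ ℕ) (c : ℝ) : rlen (monomial K c) = |c| := by
  rw [rlen_eq _ {K} (support_monomial_subset)]
  simp

theorem rlen_mul {n : ℕ} (P Q : MvPolynomial (Fin n) ℝ) : rlen (P * Q) ≤ rlen P * rlen Q := by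
  conv_lhs => rw [P.as_sum, Q.as_sum, Finset.sum_mul_sum]
  refine (rlen_sum _ _).trans ?_
  rw [rlen, rlen, Finset.sum_mul_sum]
  refine Finset.sum_le_sum fun i _ => (rlen_sum _ _).trans (Finset.sum_le_sum fun j _ => ?_)
  rw [monomial_mul, rlen_monomial, abs_mul]

theorem rlen_one {n : ℕ} : rlen (1 : MvPolynomial (Fin n) ℝ) = 1 := by
  have := rlen_monomial (0 : Fin n →₀ ℕ) 1
  simpa using this

theorem rlen_prod {n : ℕ} {ι : Type*} (S : Finset ι) (f : ι → MvPolynomial (Fin n) ℝ) :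
    rlen (∏ i ∈ S, f i) ≤ ∏ i ∈ S, rlen (f i) := by
  classical
  induction S using Finset.induction_on with
  | empty => simp [rlen_one]
  | insert a s ha ih =>
    rw [Finset.prod_insert ha, Finset.prod_insert ha]
    exact (rlen_mul _ _).trans (mul_le_mul_of_nonneg_left ih (rlen_nonneg _))

theorem rlen_pow {n : ℕ} (P : MvPolynomial (Fin n) ℝ) (k : ℕ) : rlen (P ^ k) ≤ rlen P ^ k := by
  have := rlen_prod (Finset.range k) (fun _ => P)
  simpa using this

theorem rlen_linear {n : ℕ} (T : MvPolynomial (Fin n) ℝ →ₗ[ℝ] MvPolynomial (Fin n) ℝ)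
    (B : ℝ) (hB : 1 ≤ B) (hT : ∀ J c, rlen (T (monomial J c)) ≤ B ^ (∑ j, J j) * |c|)
    (P : MvPolynomial (Fin n) ℝ) (r : Fin n → ℕ) (hr : ∀ j, P.degreeOf j ≤ r j) :
    rlen (T P) ≤ B ^ (∑ j, r j) * rlen P := by
  conv_lhs => rw [P.as_sum, map_sum]
  refine (rlen_sum _ _).trans ?_
  rw [rlen, Finset.mul_sum]
  refine Finset.sum_le_sum fun J hJ => (hT J _).trans ?_
  refine mul_le_mul_of_nonneg_right ?_ (abs_nonneg _)
  refine pow_le_pow_right₀ hB (Finset.sum_le_sum fun j _ => ?_)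
  exact (degreeOf_le_iff.1 (hr j)) J hJ

theorem rlen_rhd {n : ℕ} (I : Fin n →₀ ℕ)
    (P : MvPolynomial (Fin n) ℝ) (r : Fin n → ℕ) (hr : ∀ j, P.degreeOf j ≤ r j) :
    rlen (rhd I P) ≤ 2 ^ (∑ j, r j) * rlen P := by
  refine rlen_linear _ 2 one_le_two (fun J c => ?_) P r hr
  rw [rhd_monomial, rlen_monomial, abs_mul, mul_comm]
  refine mul_le_mul_of_nonneg_right ?_ (abs_nonneg _)
  rw [abs_of_nonneg (by positivity), ← Finset.prod_pow_eq_pow_sum]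
  refine Finset.prod_le_prod (fun _ _ => by positivity) fun j _ => ?_
  exact_mod_cast Nat.choose_le_two_pow _ _

theorem rlen_rsh {n : ℕ} (ξ : Fin n → ℝ) (A : ℝ) (hA : ∀ j, |ξ j| ≤ A) (hA0 : 0 ≤ A)
    (P : MvPolynomial (Fin n) ℝ) (r : Fin n → ℕ) (hr : ∀ j, P.degreeOf j ≤ r j) :
    rlen (rsh ξ P) ≤ (1 + A) ^ (∑ j, r j) * rlen P := by
  refine rlen_linear (rsh ξ).toLinearMap (1 + A) (by linarith) (fun J c => ?_) P r hr
  have h1 : rsh ξ (monomial J c) = monomial 0 c * ∏ j, (X j + C (ξ j)) ^ (J j) := by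
    rw [rsh, aeval_monomial, Finsupp.prod_fintype _ _ (by simp)]
    rfl
  show rlen (rsh ξ (monomial J c)) ≤ _
  rw [h1, mul_comm]
  refine (rlen_mul _ _).trans ?_
  rw [rlen_monomial]
  refine mul_le_mul_of_nonneg_right ?_ (abs_nonneg _)
  refine (rlen_prod _ _).trans ?_
  rw [← Finset.prod_pow_eq_pow_sum]
  refine Finset.prod_le_prod (fun _ _ => rlen_nonneg _) fun j _ => ?_
  refine (rlen_pow _ _).trans (pow_le_pow_left₀ (rlen_nonneg _) ?_ _)
  refine (rlen_add _ _).trans ?_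
  have e1 : rlen (X j : MvPolynomial (Fin n) ℝ) = 1 := by
    rw [X, rlen_monomial]; simp
  have e2 : rlen (C (ξ j) : MvPolynomial (Fin n) ℝ) = |ξ j| := rlen_monomial 0 _
  rw [e1, e2]; linarith [hA j]

theorem degreeOf_rhd {n : ℕ} {R : Type*} [CommRing R] (I : Fin n →₀ ℕ)
    (P : MvPolynomial (Fin n) R) (j : Fin n) : (rhd I P).degreeOf j ≤ P.degreeOf j := by
  rw [degreeOf_le_iff]
  intro K hK
  rw [mem_support_iff, rhd_coeff] at hK
  have h1 : K + I ∈ P.support := by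
    rw [mem_support_iff]; intro h; rw [h, zero_mul] at hK; exact hK rfl
  have := (degreeOf_le_iff.1 (le_refl (P.degreeOf j))) _ h1
  simp at this; omega

end


noncomputable section
open MvPolynomial

/-- All monomials of the translated polynomial have weight at least `θ`. -/
def RIdx {n : ℕ} (w : Fin n → ℝ) (ξ : Fin n → ℝ) (θ : ℝ) (P : MvPolynomial (Fin n) ℝ) : Prop :=
  ∀ K, coeff K (rsh ξ P) ≠ 0 → θ ≤ ∑ j, (K j : ℝ) * w j

theorem RIdx.mono {n : ℕ} {w ξ : Fin n → ℝ} {θ θ' : ℝ} {P : MvPolynomial (Fin n) ℝ}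
    (h : RIdx w ξ θ P) (hle : θ' ≤ θ) : RIdx w ξ θ' P := fun K hK => hle.trans (h K hK)

theorem RIdx.of_nonpos {n : ℕ} {w ξ : Fin n → ℝ} (hw : ∀ j, 0 ≤ w j) {θ : ℝ} (hθ : θ ≤ 0)
    (P : MvPolynomial (Fin n) ℝ) : RIdx w ξ θ P := fun _ _ =>
  hθ.trans (Finset.sum_nonneg fun j _ => mul_nonneg (Nat.cast_nonneg _) (hw j))

theorem RIdx.mul {n : ℕ} {w ξ : Fin n → ℝ} {θ θ' : ℝ} {P Q : MvPolynomial (Fin n) ℝ}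
    (h : RIdx w ξ θ P) (h' : RIdx w ξ θ' Q) : RIdx w ξ (θ + θ') (P * Q) := by
  classical
  intro K hK
  rw [map_mul] at hK
  have := MvPolynomial.support_mul _ _ (mem_support_iff.2 hK)
  obtain ⟨A, hA, B, hB, rfl⟩ := Finset.mem_add.1 this
  have h1 := h A (mem_support_iff.1 hA)
  have h2 := h' B (mem_support_iff.1 hB)
  simp only [Finsupp.add_apply, Nat.cast_add, add_mul, Finset.sum_add_distrib]
  linarith

theorem RIdx.sum {n : ℕ} {w ξ : Fin n → ℝ} {θ : ℝ} {ι : Type*} (S : Finset ι)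
    (f : ι → MvPolynomial (Fin n) ℝ) (h : ∀ i ∈ S, RIdx w ξ θ (f i)) :
    RIdx w ξ θ (∑ i ∈ S, f i) := by
  intro K hK
  rw [map_sum, coeff_sum] at hK
  obtain ⟨i, hi, hne⟩ := Finset.exists_ne_zero_of_sum_ne_zero hK
  exact h i hi K hne

theorem RIdx.prod {n : ℕ} {w ξ : Fin n → ℝ} (hw : ∀ j, 0 ≤ w j) {ι : Type*} (S : Finset ι)
    (f : ι → MvPolynomial (Fin n) ℝ) (θ : ι → ℝ) (h : ∀ i ∈ S, RIdx w ξ (θ i) (f i)) :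
    RIdx w ξ (∑ i ∈ S, θ i) (∏ i ∈ S, f i) := by
  classical
  induction S using Finset.induction_on with
  | empty => exact RIdx.of_nonpos hw (by simp) _
  | insert a s ha ih =>
    rw [Finset.sum_insert ha, Finset.prod_insert ha]
    exact (h a (by simp)).mul (ih fun i hi => h i (by simp [hi]))

theorem RIdx.smul {n : ℕ} {w ξ : Fin n → ℝ} {θ : ℝ} {P : MvPolynomial (Fin n) ℝ}
    (h : RIdx w ξ θ P) (c : ℝ) : RIdx w ξ θ (c • P) := by
  intro K hK
  rw [map_smul, coeff_smul] at hK
  exact h K (right_ne_zero_of_smul hK)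

theorem RIdx.det {n s : ℕ} {w ξ : Fin n → ℝ} (hw : ∀ j, 0 ≤ w j)
    (A : Matrix (Fin s) (Fin s) (MvPolynomial (Fin n) ℝ)) (θ : Fin s → ℝ)
    (h : ∀ i j, RIdx w ξ (θ j) (A i j)) : RIdx w ξ (∑ j, θ j) A.det := by
  rw [Matrix.det_apply]
  refine RIdx.sum _ _ fun σ _ => ?_
  have := (RIdx.prod hw Finset.univ (fun i => A (σ i) i) θ fun i _ => h _ _).smul
    ((Equiv.Perm.sign σ : ℤ) : ℝ)
  convert this using 1
  rw [Units.smul_def, Int.cast_smul_eq_zsmul]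

theorem RIdx.rhd {n : ℕ} {w ξ : Fin n → ℝ} {θ : ℝ} {P : MvPolynomial (Fin n) ℝ}
    (h : RIdx w ξ θ P) (I : Fin n →₀ ℕ) :
    RIdx w ξ (θ - ∑ j, (I j : ℝ) * w j) (rhd I P) := by
  intro K hK
  rw [rsh_rhd, rhd_coeff] at hK
  have := h _ (left_ne_zero_of_mul hK)
  simp only [Finsupp.add_apply, Nat.cast_add, add_mul, Finset.sum_add_distrib] at this
  linarith

theorem rlen_det {n s : ℕ} (A : Matrix (Fin s) (Fin s) (MvPolynomial (Fin n) ℝ)) (B : ℝ)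
    (h : ∀ i j, rlen (A i j) ≤ B) : rlen A.det ≤ s.factorial * B ^ s := by
  rw [Matrix.det_apply]
  refine (rlen_sum _ _).trans ?_
  have : ∀ σ ∈ (Finset.univ : Finset (Equiv.Perm (Fin s))),
      rlen (Equiv.Perm.sign σ • ∏ i, A (σ i) i) ≤ B ^ s := by
    intro σ _
    have e : Equiv.Perm.sign σ • ∏ i, A (σ i) i
        = monomial 0 ((Equiv.Perm.sign σ : ℤ) : ℝ) * ∏ i, A (σ i) i := by
      rw [Units.smul_def, ← Int.cast_smul_eq_zsmul ℝ, smul_eq_C_mul]; rfl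
    rw [e]
    refine (rlen_mul _ _).trans ?_
    rw [rlen_monomial]
    have : |((Equiv.Perm.sign σ : ℤ) : ℝ)| = 1 := by
      rcases Int.units_eq_one_or (Equiv.Perm.sign σ) with h | h <;> rw [h] <;> simp
    rw [this, one_mul]
    refine (rlen_prod _ _).trans ?_
    refine (Finset.prod_le_prod (fun _ _ => rlen_nonneg _) fun i _ => h (σ i) i).trans ?_
    simp
  refine (Finset.sum_le_sum this).trans ?_
  simp [Fintype.card_perm]

theorem degreeOf_det {n s : ℕ} {R : Type*} [CommRing R]
    (A : Matrix (Fin s) (Fin s) (MvPolynomial (Fin n) R)) (l : Fin n) (B : ℕ)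
    (h : ∀ i j, (A i j).degreeOf l ≤ B) : A.det.degreeOf l ≤ s * B := by
  rw [Matrix.det_apply]
  refine (degreeOf_sum_le _ _ _).trans (Finset.sup_le fun σ _ => ?_)
  have e : Equiv.Perm.sign σ • ∏ i, A (σ i) i
        = C ((Equiv.Perm.sign σ : ℤ) : R) * ∏ i, A (σ i) i := by
      rw [Units.smul_def, ← Int.cast_smul_eq_zsmul R, smul_eq_C_mul]
  rw [e]
  refine (degreeOf_C_mul_le _ _ _).trans ?_
  refine (degreeOf_prod_le _ _ _).trans ?_
  refine (Finset.sum_le_sum fun i _ => h _ _).trans ?_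
  simp

/-- product in separated variables -/
def rtens {n : ℕ} (ψ : Polynomial ℝ) (φ : MvPolynomial (Fin n) ℝ) :
    MvPolynomial (Fin (n + 1)) ℝ :=
  (finSuccEquiv ℝ n).symm (ψ.map C * Polynomial.C φ)

theorem rtens_coeff {n : ℕ} (ψ : Polynomial ℝ) (φ : MvPolynomial (Fin n) ℝ) (k : ℕ)
    (K : Fin n →₀ ℕ) : coeff (Finsupp.cons k K) (rtens ψ φ) = ψ.coeff k * coeff K φ := by
  rw [← finSuccEquiv_coeff_coeff, rtens, AlgEquiv.apply_symm_apply, Polynomial.coeff_mul_C,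
    Polynomial.coeff_map, coeff_C_mul]

theorem rext {n : ℕ} {P Q : MvPolynomial (Fin (n + 1)) ℝ}
    (h : ∀ k K, coeff (Finsupp.cons k K) P = coeff (Finsupp.cons k K) Q) : P = Q := by
  ext K
  rw [← Finsupp.cons_tail K]; exact h _ _

theorem rhd_rtens {n : ℕ} (ψ : Polynomial ℝ) (φ : MvPolynomial (Fin n) ℝ) (j : ℕ)
    (I : Fin n →₀ ℕ) :
    rhd (Finsupp.cons j I) (rtens ψ φ) = rtens (Polynomial.hasseDeriv j ψ) (rhd I φ) := by
  apply rext
  intro k K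
  have : (Finsupp.cons k K + Finsupp.cons j I : Fin (n+1) →₀ ℕ) = Finsupp.cons (k + j) (K + I) := by
    ext i; refine Fin.cases ?_ (fun i => ?_) i <;> simp
  rw [rhd_coeff, rtens_coeff, this, rtens_coeff, rhd_coeff, Polynomial.hasseDeriv_coeff,
    Fin.prod_univ_succ]
  simp; ring

/-- embeddings -/
def rι (n : ℕ) : Polynomial ℝ →+* MvPolynomial (Fin (n + 1)) ℝ :=
  ((finSuccEquiv ℝ n).symm : Polynomial (MvPolynomial (Fin n) ℝ) →+* MvPolynomial (Fin (n + 1)) ℝ).comp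
    (Polynomial.mapRingHom C)
def rκ (n : ℕ) : MvPolynomial (Fin n) ℝ →+* MvPolynomial (Fin (n + 1)) ℝ :=
  ((finSuccEquiv ℝ n).symm : Polynomial (MvPolynomial (Fin n) ℝ) →+* MvPolynomial (Fin (n + 1)) ℝ).comp
    Polynomial.C

theorem rtens_eq {n : ℕ} (ψ : Polynomial ℝ) (φ : MvPolynomial (Fin n) ℝ) :
    rtens ψ φ = rκ n φ * rι n ψ := by
  simp [rtens, rι, rκ, mul_comm]

theorem rsh_rtens {n : ℕ} (ψ : Polynomial ℝ) (φ : MvPolynomial (Fin n) ℝ) (a : ℝ)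
    (ξ : Fin n → ℝ) :
    rsh (Fin.cons a ξ) (rtens ψ φ) = rtens (Polynomial.taylor a ψ) (rsh ξ φ) := by
  rw [rtens_eq, rtens_eq, map_mul]
  congr 1
  · have : ∀ φ : MvPolynomial (Fin n) ℝ, rκ n φ = rename Fin.succ φ := by
      intro φ
      show (finSuccEquiv ℝ n).symm (Polynomial.C φ) = _
      rw [AlgEquiv.symm_apply_eq]
      induction φ using MvPolynomial.induction_on with
      | C a => simp [finSuccEquiv_apply]
      | add p q hp hq => simp only [map_add, hp, hq]
      | mul_X p j hp => simp only [map_mul, hp]; simp [finSuccEquiv_X_succ]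
    rw [this, this]
    induction φ using MvPolynomial.induction_on with
    | C a => simp [rsh]
    | add p q hp hq => simp only [map_add, hp, hq]
    | mul_X p j hp => simp only [map_mul, hp]; simp [rsh]
  · have h0 : rι n Polynomial.X = X 0 := by
      show (finSuccEquiv ℝ n).symm (Polynomial.map C Polynomial.X) = _
      rw [AlgEquiv.symm_apply_eq]; simp [finSuccEquiv_X_zero]
    have hC : ∀ c, rι n (Polynomial.C c) = C c := by
      intro c
      show (finSuccEquiv ℝ n).symm (Polynomial.map C (Polynomial.C c)) = _
      rw [AlgEquiv.symm_apply_eq]; simp [finSuccEquiv_apply]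
    induction ψ using Polynomial.induction_on' with
    | add p q hp hq => simp only [map_add, hp, hq]
    | monomial k c =>
      rw [← Polynomial.C_mul_X_pow_eq_monomial, Polynomial.taylor_mul, Polynomial.taylor_pow]
      simp [h0, hC, rsh]

end


noncomputable section
open MvPolynomial

theorem poly_wr_ker (f g : Polynomial ℝ) (hg : g ≠ 0)
    (h : Polynomial.derivative f * g = f * Polynomial.derivative g) :
    ∃ c : ℝ, f = Polynomial.C c * g := by
  have hl : g.leadingCoeff ≠ 0 := Polynomial.leadingCoeff_ne_zero.2 hg
  set c := f.coeff g.natDegree / g.leadingCoeff with hc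
  refine ⟨c, ?_⟩
  by_contra hne
  set M := f - Polynomial.C c * g with hM
  have hM0 : M ≠ 0 := sub_ne_zero.2 hne
  have hMc : M.coeff g.natDegree = 0 := by
    rw [hM, Polynomial.coeff_sub, Polynomial.coeff_C_mul, Polynomial.coeff_natDegree, hc]
    field_simp; ring
  have hrel : Polynomial.derivative M * g = M * Polynomial.derivative g := by
    rw [hM]; simp only [Polynomial.derivative_sub, Polynomial.derivative_C_mul, sub_mul, h]; ring
  have key : ((M.natDegree : ℝ) - g.natDegree) * (M.leadingCoeff * g.leadingCoeff) = 0 := by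
    have h2 : Polynomial.X * Polynomial.derivative M * g
        = M * (Polynomial.X * Polynomial.derivative g) := by
      rw [mul_assoc, hrel]; ring
    have hx : ∀ p : Polynomial ℝ, (Polynomial.X * Polynomial.derivative p).coeff p.natDegree
        = p.natDegree * p.leadingCoeff := by
      intro p
      rcases hn : p.natDegree with _ | n
      · simp
      · rw [Polynomial.coeff_X_mul, Polynomial.coeff_derivative, ← hn, Polynomial.coeff_natDegree,
          hn]; push_cast; ring
    have hxd : ∀ p : Polynomial ℝ, (Polynomial.X * Polynomial.derivative p).natDegree
        ≤ p.natDegree := by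
      intro p
      rcases hn : p.natDegree with _ | n
      · rw [Polynomial.eq_C_of_natDegree_eq_zero hn]; simp
      · refine Polynomial.natDegree_mul_le.trans ?_
        have := Polynomial.natDegree_derivative_le p
        have := Polynomial.natDegree_X_le (R := ℝ)
        omega
    have h3 := congrArg (fun p => Polynomial.coeff p (M.natDegree + g.natDegree)) h2
    rw [Polynomial.coeff_mul_add_eq_of_natDegree_le (hxd M) le_rfl,
      Polynomial.coeff_mul_add_eq_of_natDegree_le le_rfl (hxd g), hx, hx] at h3
    simp only [Polynomial.coeff_natDegree] at h3
    linear_combination h3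
  have hMl : M.leadingCoeff ≠ 0 := Polynomial.leadingCoeff_ne_zero.2 hM0
  rcases mul_eq_zero.1 key with h1 | h1
  · have : M.natDegree = g.natDegree := by exact_mod_cast sub_eq_zero.1 h1
    rw [← this] at hMc
    exact hMl hMc
  · exact mul_ne_zero hMl hl h1

theorem poly_generic (s : ℕ) : ∀ (W : Submodule ℝ (Polynomial ℝ)) [FiniteDimensional ℝ W],
    Module.finrank ℝ W ≤ s → ∃ S : Finset ℝ, ∀ t ∉ S, ∀ f ∈ W,
      (Polynomial.X - Polynomial.C t) ^ s ∣ f → f = 0 := by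
  classical
  induction s with
  | zero =>
    intro W _ h
    refine ⟨∅, fun t _ f hf _ => ?_⟩
    have : W = ⊥ := Submodule.finrank_eq_zero.1 (Nat.le_zero.1 h)
    rw [this] at hf; simpa using hf
  | succ s ih =>
    intro W _ h
    by_cases hW : W = ⊥
    · refine ⟨∅, fun t _ f hf _ => ?_⟩
      rw [hW] at hf; simpa using hf
    obtain ⟨g, hgW, hg⟩ := Submodule.exists_mem_ne_zero_of_ne_bot hW
    let T : Polynomial ℝ →ₗ[ℝ] Polynomial ℝ :=
      (LinearMap.mulRight ℝ g).comp Polynomial.derivative -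
        LinearMap.mulRight ℝ (Polynomial.derivative g)
    have hT : ∀ f, T f = Polynomial.derivative f * g - f * Polynomial.derivative g := by
      intro f; simp [T]
    have hfr : Module.finrank ℝ (W.map T) ≤ s := by
      have h1 := LinearMap.finrank_range_add_finrank_ker (T.domRestrict W)
      rw [LinearMap.range_domRestrict] at h1
      have h2 : 0 < Module.finrank ℝ (LinearMap.ker (T.domRestrict W)) := by
        rw [Nat.pos_iff_ne_zero]
        intro h0
        have := Submodule.finrank_eq_zero.1 h0
        have hm : (⟨g, hgW⟩ : W) ∈ LinearMap.ker (T.domRestrict W) := by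
          rw [LinearMap.mem_ker]; show T g = 0; rw [hT]; ring
        rw [this, Submodule.mem_bot] at hm
        exact hg (congrArg Subtype.val hm)
      omega
    obtain ⟨S, hS⟩ := ih (W.map T) hfr
    refine ⟨S ∪ g.roots.toFinset, fun t ht f hf hd => ?_⟩
    simp only [Finset.mem_union, not_or, Multiset.mem_toFinset] at ht
    have hgt : g.eval t ≠ 0 := fun h0 => ht.2 ((Polynomial.mem_roots hg).2 h0)
    have hTf : T f = 0 := by
      refine hS t ht.1 _ (Submodule.mem_map_of_mem hf) ?_
      rw [hT]
      refine dvd_sub (Dvd.dvd.mul_right ?_ _) (Dvd.dvd.mul_right ?_ _)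
      · obtain ⟨u, rfl⟩ := hd
        rw [Polynomial.derivative_mul, Polynomial.derivative_pow]
        refine dvd_add ?_ ?_
        · refine Dvd.dvd.mul_right (Dvd.dvd.mul_right (Dvd.dvd.mul_left ?_ _) _) _
          simp
        · exact Dvd.dvd.mul_right (pow_dvd_pow _ (Nat.le_succ s)) _
      · exact (pow_dvd_pow _ (Nat.le_succ s)).trans hd
    rw [hT, sub_eq_zero] at hTf
    obtain ⟨c, rfl⟩ := poly_wr_ker f g hg hTf
    have h0 : (Polynomial.C c * g).eval t = 0 := by
      obtain ⟨u, hu⟩ := hd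
      rw [hu]; simp
    rw [Polynomial.eval_mul, Polynomial.eval_C] at h0
    rcases mul_eq_zero.1 h0 with h0 | h0
    · simp [h0]
    · exact absurd h0 hgt

theorem poly_wronskian {s : ℕ} (ψ : Fin s → Polynomial ℝ) (hψ : LinearIndependent ℝ ψ) :
    (Matrix.of fun (k j : Fin s) => Polynomial.hasseDeriv (j : ℕ) (ψ k)).det ≠ 0 := by
  intro hdet
  have hfd : FiniteDimensional ℝ (Submodule.span ℝ (Set.range ψ)) :=
    FiniteDimensional.span_of_finite ℝ (Set.finite_range ψ)
  obtain ⟨S, hS⟩ := poly_generic s (Submodule.span ℝ (Set.range ψ))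
    ((finrank_range_le_card ψ).trans (by simp))
  obtain ⟨t, ht⟩ := Infinite.exists_notMem_finset S
  have h1 := congrArg (Polynomial.evalRingHom t) hdet
  rw [RingHom.map_det, map_zero] at h1
  obtain ⟨c, hc, hmul⟩ := Matrix.exists_vecMul_eq_zero_iff.2 h1
  have hz : ∑ k, c k • ψ k = 0 := by
    refine hS t ht _ (Submodule.sum_mem _ fun k _ => Submodule.smul_mem _ _
      (Submodule.subset_span ⟨k, rfl⟩)) ?_
    rw [Polynomial.X_sub_C_pow_dvd_iff, Polynomial.X_pow_dvd_iff]
    intro d hd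
    rw [← Polynomial.taylor_apply, Polynomial.taylor_coeff]
    have := congrFun hmul ⟨d, hd⟩
    simp only [Matrix.vecMul, dotProduct, RingHom.mapMatrix_apply, Matrix.map_apply,
      Matrix.of_apply, Polynomial.coe_evalRingHom, Pi.zero_apply] at this
    rw [map_sum, Polynomial.eval_finsetSum]
    simpa using this
  exact hc (funext fun k => Fintype.linearIndependent_iff.1 hψ c hz k)

theorem kron_inj {n : ℕ} (B : ℕ) (f : MvPolynomial (Fin n) ℝ)
    (hB : ∀ K ∈ f.support, ∀ j, K j < B)
    (h : aeval (fun j : Fin n => (Polynomial.X : Polynomial ℝ) ^ (B ^ (j : ℕ))) f = 0) : f = 0 := by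
  classical
  by_contra hne
  obtain ⟨K, hK⟩ := support_nonempty.2 hne
  have h1 : ∀ J : Fin n →₀ ℕ, aeval (fun j : Fin n => (Polynomial.X : Polynomial ℝ) ^ (B ^ (j : ℕ)))
      (monomial J (coeff J f)) = Polynomial.monomial (∑ j, J j * B ^ (j : ℕ)) (coeff J f) := by
    intro J
    rw [aeval_monomial, Finsupp.prod_fintype _ _ (by simp), ← Polynomial.C_mul_X_pow_eq_monomial]
    congr 1
    rw [← Finset.prod_pow_eq_pow_sum]
    exact Finset.prod_congr rfl fun j _ => by rw [← pow_mul, mul_comm]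
  rw [f.as_sum, map_sum, Finset.sum_congr rfl fun J _ => h1 J] at h
  have h2 := congrArg (fun p => Polynomial.coeff p (∑ j, K j * B ^ (j : ℕ))) h
  simp only [Polynomial.finsetSum_coeff, Polynomial.coeff_monomial, Polynomial.coeff_zero] at h2
  rw [Finset.sum_eq_single K] at h2
  · simp at h2; exact (mem_support_iff.1 hK) h2
  · intro J hJ hJK
    rw [if_neg]
    intro he
    apply hJK
    have : (finFunctionFinEquiv (fun j => (⟨J j, hB J hJ j⟩ : Fin B)) : Fin (B ^ n))
        = finFunctionFinEquiv (fun j => (⟨K j, hB K hK j⟩ : Fin B)) := by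
      apply Fin.ext
      rw [finFunctionFinEquiv_apply, finFunctionFinEquiv_apply]
      exact he
    have := finFunctionFinEquiv.injective this
    ext j
    have := congrFun this j
    simpa using this
  · intro h; exact absurd hK h

theorem mv_generic {n s : ℕ} (φ : Fin s → MvPolynomial (Fin n) ℝ) (hφ : LinearIndependent ℝ φ) :
    ∃ ξ : Fin n → ℝ, ∀ c : Fin s → ℝ,
      (∀ I : Fin n →₀ ℕ, ∑ j, I j < s → coeff I (rsh ξ (∑ k, c k • φ k)) = 0) → c = 0 := by
  classical
  set B := 1 + ∑ k, (φ k).totalDegree with hBdef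
  set g : MvPolynomial (Fin n) ℝ →ₐ[ℝ] Polynomial ℝ :=
    aeval (fun j : Fin n => (Polynomial.X : Polynomial ℝ) ^ (B ^ (j : ℕ))) with hg
  have hfd : FiniteDimensional ℝ (Submodule.span ℝ (Set.range fun k => g (φ k))) :=
    FiniteDimensional.span_of_finite ℝ (Set.finite_range _)
  obtain ⟨S, hS⟩ := poly_generic s (Submodule.span ℝ (Set.range fun k => g (φ k)))
    ((finrank_range_le_card _).trans (by simp))
  obtain ⟨t, ht⟩ := Infinite.exists_notMem_finset S
  refine ⟨fun j => t ^ (B ^ (j : ℕ)), fun c hc => ?_⟩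
  set f := ∑ k, c k • φ k with hf
  have hgf : g f = 0 := by
    refine hS t ht _ ?_ ?_
    · rw [hf, map_sum]
      refine Submodule.sum_mem _ fun k _ => ?_
      rw [map_smul]
      exact Submodule.smul_mem _ _ (Submodule.subset_span ⟨k, rfl⟩)
    · have e : g f = aeval (fun j : Fin n => (Polynomial.X : Polynomial ℝ) ^ (B ^ (j : ℕ))
          - Polynomial.C (t ^ (B ^ (j : ℕ)))) (rsh (fun j : Fin n => t ^ (B ^ (j : ℕ))) f) := by
        generalize f = f
        induction f using MvPolynomial.induction_on with
        | C a => simp [hg, rsh]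
        | add p q hp hq => simp only [map_add, hp, hq]
        | mul_X p j hp => 
          rw [map_mul, map_mul, map_mul, hp]
          congr 1
          simp [hg, rsh, Polynomial.C_eq_algebraMap]
          rw [map_pow]; ring
      rw [e, aeval_def, eval₂_eq']
      refine Finset.dvd_sum fun I hI => Dvd.dvd.mul_left ?_ _
      have hIs : s ≤ ∑ j, I j := by
        by_contra hlt
        exact (mem_support_iff.1 hI) (hc I (by omega))
      refine (pow_dvd_pow _ hIs).trans ?_
      rw [← Finset.prod_pow_eq_pow_sum]
      refine Finset.prod_dvd_prod_of_dvd _ _ fun j _ => pow_dvd_pow_of_dvd ?_ _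
      rw [map_pow]
      exact sub_dvd_pow_sub_pow _ _ _
  have hf0 : f = 0 := by
    refine kron_inj B f (fun K hK j => ?_) hgf
    rw [mem_support_iff, hf, coeff_sum] at hK
    obtain ⟨k, -, hk⟩ := Finset.exists_ne_zero_of_sum_ne_zero hK
    rw [coeff_smul] at hk
    have h1 := le_totalDegree (mem_support_iff.2 (right_ne_zero_of_smul hk))
    have h2 := Finset.single_le_sum (f := fun k => (φ k).totalDegree) (fun _ _ => Nat.zero_le _)
      (Finset.mem_univ k)
    have h3 : K j ≤ K.sum fun _ e => e := by
      rw [Finsupp.sum_fintype _ _ (by simp)]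
      exact Finset.single_le_sum (f := fun j => K j) (fun _ _ => Nat.zero_le _) (Finset.mem_univ j)
    omega
  exact funext fun k => Fintype.linearIndependent_iff.1 hφ c hf0 k

theorem mv_wronskian {n s : ℕ} (φ : Fin s → MvPolynomial (Fin n) ℝ)
    (hφ : LinearIndependent ℝ φ) :
    ∃ I : Fin s → (Fin n →₀ ℕ), (∀ i, ∑ j, I i j < s) ∧
      (Matrix.of fun i k => rhd (I i) (φ k)).det ≠ 0 := by
  obtain ⟨ξ, hξ⟩ := mv_generic φ hφ
  set V : Set (Fin s → ℝ) := {v | ∃ I : Fin n →₀ ℕ, ∑ j, I j < s ∧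
    v = fun k => eval ξ (rhd I (φ k))} with hV
  have htop : Submodule.span ℝ V = ⊤ := by
    by_contra hne
    obtain ⟨F, hF0, hF⟩ := Submodule.exists_le_ker_of_lt_top _ (lt_top_iff_ne_top.2 hne)
    have hexp : ∀ v, F v = ∑ k, F (Pi.single k 1) * v k := by
      intro v
      conv_lhs => rw [pi_eq_sum_univ' v, map_sum]
      refine Finset.sum_congr rfl fun k _ => ?_
      rw [map_smul, smul_eq_mul, mul_comm]
    have hc : (fun k => F (Pi.single k 1)) = 0 := by
      apply hξ
      intro I hI
      have h1 : F (fun k => eval ξ (rhd I (φ k))) = 0 :=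
        LinearMap.mem_ker.1 (hF (Submodule.subset_span ⟨I, hI, rfl⟩))
      rw [hexp] at h1
      rw [← eval_rhd, map_sum, map_sum]
      simpa [smul_eval] using h1
    apply hF0
    ext v
    simp [congrFun hc]
  obtain ⟨f, hfV, -, hli⟩ := Submodule.exists_fun_fin_finrank_span_eq ℝ V
  have hrk : Module.finrank ℝ (Submodule.span ℝ V) = s := by rw [htop]; simp
  let e : Fin s ≃ Fin (Module.finrank ℝ (Submodule.span ℝ V)) := finCongr hrk.symm
  have hli' := hli.comp e e.injective
  choose I hI hIf using fun i => hfV (e i)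
  refine ⟨I, hI, fun hdet => ?_⟩
  have h1 := congrArg (eval ξ) hdet
  rw [RingHom.map_det, map_zero] at h1
  have h2 : (Matrix.of fun i k => eval ξ (rhd (I i) (φ k))).row = f ∘ e := by
    funext i; simp only [Function.comp]; rw [hIf i]; rfl
  have h3 : IsUnit (Matrix.of fun i k => eval ξ (rhd (I i) (φ k))) := by
    rw [← Matrix.linearIndependent_rows_iff_isUnit, h2]; exact hli'
  rw [Matrix.isUnit_iff_isUnit_det] at h3
  exact h3.ne_zero h1

end


noncomputable section
open MvPolynomial

theorem mv_separate {n : ℕ} (P : MvPolynomial (Fin (n + 1)) ℝ) (r0 : ℕ)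
    (hr : P.degreeOf 0 ≤ r0) :
    ∃ s ≤ r0 + 1, ∃ (ψ : Fin s → Polynomial ℝ) (φ : Fin s → MvPolynomial (Fin n) ℝ),
      LinearIndependent ℝ ψ ∧ LinearIndependent ℝ φ ∧ P = ∑ k, rtens (ψ k) (φ k) := by
  classical
  set p : Fin (r0 + 1) → MvPolynomial (Fin n) ℝ := fun k => (finSuccEquiv ℝ n P).coeff k with hp
  set W := Submodule.span ℝ (Set.range p) with hW
  have hfd : FiniteDimensional ℝ W := FiniteDimensional.span_of_finite ℝ (Set.finite_range p)
  have hmem : ∀ k, p k ∈ W := fun k => Submodule.subset_span ⟨k, rfl⟩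
  set b := Module.finBasis ℝ W with hb
  refine ⟨Module.finrank ℝ W, (finrank_range_le_card p).trans (by simp),
    fun i => ∑ k : Fin (r0 + 1), Polynomial.monomial (k : ℕ) (b.repr ⟨p k, hmem k⟩ i), fun i => (b i : _),
    ?_, ?_, ?_⟩
  · rw [Fintype.linearIndependent_iff]
    intro l hl i
    have h1 : ∀ k, ∑ i, l i * b.repr ⟨p k, hmem k⟩ i = 0 := by
      intro k
      have := congrArg (fun f => Polynomial.coeff f (k : ℕ)) hl
      simp only [Polynomial.finsetSum_coeff, Polynomial.coeff_smul, Polynomial.coeff_monomial,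
        Polynomial.coeff_zero, smul_eq_mul, Fin.val_inj, Finset.sum_ite_eq', Finset.mem_univ,
        if_true] at this
      exact this
    let Λ : W →ₗ[ℝ] ℝ := ∑ i, l i • b.coord i
    have hΛ : ∀ k, Λ ⟨p k, hmem k⟩ = 0 := by
      intro k
      rw [← h1 k]; simp [Λ]
    have hΛb : Λ (b i) = l i := by
      simp [Λ, Finsupp.single_apply]
    obtain ⟨d, hd⟩ := (Submodule.mem_span_range_iff_exists_fun ℝ).1 (b i).2
    have : b i = ∑ k, d k • (⟨p k, hmem k⟩ : W) := by
      apply Subtype.ext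
      rw [← hd]; simp
    rw [← hΛb, this, map_sum]
    exact Finset.sum_eq_zero fun k _ => by rw [map_smul, hΛ, smul_zero]
  · exact b.linearIndependent.map' W.subtype (Submodule.ker_subtype W)
  · apply rext
    intro k K
    rw [coeff_sum]
    simp_rw [rtens_coeff]
    rw [← finSuccEquiv_coeff_coeff]
    by_cases hk : k < r0 + 1
    · have h1 : (finSuccEquiv ℝ n P).coeff k = ∑ i, (b.repr ⟨p ⟨k, hk⟩, hmem _⟩ i) • (b i : MvPolynomial (Fin n) ℝ) := by
        have := congrArg Subtype.val (b.sum_repr ⟨p ⟨k, hk⟩, hmem _⟩)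
        simp only [Submodule.coe_sum, Submodule.coe_smul] at this
        rw [this]
      rw [h1, coeff_sum]
      refine Finset.sum_congr rfl fun i _ => ?_
      rw [coeff_smul, smul_eq_mul]
      congr 1
      simp only [Polynomial.finsetSum_coeff, Polynomial.coeff_monomial]
      rw [Finset.sum_eq_single ⟨k, hk⟩]
      · simp
      · intro j _ hj; rw [if_neg]; intro h; exact hj (Fin.ext h)
      · simp
    · have h1 : (finSuccEquiv ℝ n P).coeff k = 0 := by
        apply Polynomial.coeff_eq_zero_of_natDegree_lt
        rw [natDegree_finSuccEquiv]; omega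
      rw [h1, coeff_zero]
      symm
      refine Finset.sum_eq_zero fun i _ => ?_
      rw [Polynomial.finsetSum_coeff, Finset.sum_eq_zero, zero_mul]
      intro j _
      rw [Polynomial.coeff_monomial, if_neg]
      have := j.2; omega

theorem one_var_bound (G : Polynomial ℤ) (hG : G ≠ 0) (p : ℤ) (q : ℕ) (hq : 0 < q)
    (hpq : IsCoprime p (q : ℤ)) :
    ∃ k : ℕ, (Polynomial.taylor ((p : ℝ) / q) (G.map (Int.castRingHom ℝ))).coeff k ≠ 0 ∧
      (q : ℝ) ^ k ≤ |(G.leadingCoeff : ℝ)| := by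
  classical
  have hq0 : (q : ℝ) ≠ 0 := by positivity
  have hGR : G.map (Int.castRingHom ℝ) ≠ 0 :=
    (Polynomial.map_ne_zero_iff (RingHom.injective_int _)).2 hG
  have hT : Polynomial.taylor ((p : ℝ) / q) (G.map (Int.castRingHom ℝ)) ≠ 0 := by
    intro h; exact hGR ((Polynomial.taylor_eq_zero _ _).1 h)
  have hex : ∃ k, (Polynomial.taylor ((p : ℝ) / q) (G.map (Int.castRingHom ℝ))).coeff k ≠ 0 := by
    by_contra hc
    push Not at hc
    exact hT (Polynomial.ext fun k => by rw [hc k, Polynomial.coeff_zero])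
  refine ⟨Nat.find hex, Nat.find_spec hex, ?_⟩
  set k := Nat.find hex
  have h1 : (Polynomial.X - Polynomial.C ((p : ℝ) / q)) ^ k ∣ G.map (Int.castRingHom ℝ) := by
    rw [Polynomial.X_sub_C_pow_dvd_iff, Polynomial.X_pow_dvd_iff]
    intro d hd
    rw [← Polynomial.taylor_apply]
    exact not_not.1 (Nat.find_min hex hd)
  set l : Polynomial ℤ := Polynomial.C (q : ℤ) * Polynomial.X + Polynomial.C (-p) with hl
  have hprim : l.IsPrimitive := by
    intro c hc
    rw [Polynomial.C_dvd_iff_dvd_coeff] at hc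
    have h0 := hc 0
    have h1 := hc 1
    simp only [hl, Polynomial.coeff_add, Polynomial.coeff_C_mul, Polynomial.coeff_X_zero,
      Polynomial.coeff_X_one, Polynomial.coeff_C_zero, Polynomial.coeff_C_succ, mul_zero, zero_add,
      mul_one, add_zero, dvd_neg, Polynomial.coeff_C_of_ne_zero one_ne_zero] at h0 h1
    exact hpq.isUnit_of_dvd' h0 h1
  have hprimk : (l ^ k).IsPrimitive := by
    generalize k = k'
    induction k' with
    | zero => rw [pow_zero]; exact Polynomial.isPrimitive_one
    | succ n ih => rw [pow_succ]; exact ih.mul hprim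
  have h2 : (l ^ k).map (Int.castRingHom ℝ) ∣ G.map (Int.castRingHom ℝ) := by
    have e : (l ^ k).map (Int.castRingHom ℝ) = Polynomial.C ((q : ℝ) ^ k) *
        (Polynomial.X - Polynomial.C ((p : ℝ) / q)) ^ k := by
      rw [Polynomial.map_pow, map_pow, ← mul_pow]
      congr 1
      rw [mul_sub, ← map_mul, mul_div_cancel₀ _ hq0]
      simp [hl]; ring
    rw [e]
    exact (Polynomial.isUnit_C.2 (by positivity : (q : ℝ) ^ k ≠ 0).isUnit).mul_left_dvd.2 h1
  have h3 : (l ^ k) ∣ G := by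
    rw [Polynomial.IsPrimitive.Int.dvd_iff_map_cast_dvd_map_cast _ _ hprimk]
    have e : (algebraMap ℚ ℝ).comp (Int.castRingHom ℚ) = Int.castRingHom ℝ := RingHom.ext_int _ _
    have hd : Polynomial.map (algebraMap ℚ ℝ) (Polynomial.map (Int.castRingHom ℚ) (l ^ k)) ∣
        Polynomial.map (algebraMap ℚ ℝ) (Polynomial.map (Int.castRingHom ℚ) G) := by
      rw [Polynomial.map_map, Polynomial.map_map, e]; exact h2
    exact (Polynomial.map_dvd_map' (algebraMap ℚ ℝ)).1 hd
  obtain ⟨u, hu⟩ := h3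
  have h4 : (q : ℤ) ^ k ∣ G.leadingCoeff := by
    rw [hu, Polynomial.leadingCoeff_mul, Polynomial.leadingCoeff_pow,
      hl, Polynomial.leadingCoeff_linear (by positivity)]
    exact dvd_mul_right _ _
  have h5 := Int.le_of_dvd (abs_pos.2 (Polynomial.leadingCoeff_ne_zero.2 hG)) ((dvd_abs _ _).2 h4)
  exact_mod_cast h5

theorem sum_theta (s r0 : ℕ) (hs : s ≤ r0 + 1) (hr0 : 0 < r0) (ε ω : ℝ) (hε : 0 < ε) (hε1 : ε ≤ 1)
    (hω : ω ≤ ε / 64) :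
    (s : ℝ) * (ε ^ 2 / 16) ≤ ∑ j : Fin s, max 0 (ε - ω - (j : ℝ) * (1 / (r0 : ℝ))) := by
  have hr : (0 : ℝ) < r0 := by exact_mod_cast hr0
  have hs' : (s : ℝ) ≤ 2 * r0 := by
    have : s ≤ 2 * r0 := by omega
    exact_mod_cast this
  have hsn : (0 : ℝ) ≤ s := Nat.cast_nonneg _
  rw [Fin.sum_univ_eq_sum_range (fun j => max 0 (ε - ω - (j : ℝ) * (1 / (r0 : ℝ))))]
  set M := ⌈ε * s / 4⌉₊ with hM
  have hMs : M ≤ s := by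
    rw [hM, Nat.ceil_le]; nlinarith
  have hMl : ε * s / 4 ≤ M := Nat.le_ceil _
  calc (s : ℝ) * (ε ^ 2 / 16) ≤ M * (ε / 4) := by nlinarith
    _ = ∑ j ∈ Finset.range M, ε / 4 := by simp
    _ ≤ ∑ j ∈ Finset.range M, max 0 (ε - ω - (j : ℝ) * (1 / (r0 : ℝ))) := by
        refine Finset.sum_le_sum fun j hj => le_max_of_le_right ?_
        have h1 : (j : ℝ) < ε * s / 4 := Nat.lt_ceil.1 (Finset.mem_range.1 hj)
        have h2 : (j : ℝ) * (1 / r0) ≤ ε / 2 := by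
          rw [mul_one_div, div_le_iff₀ hr]; nlinarith
        linarith
    _ ≤ _ := Finset.sum_le_sum_of_subset_of_nonneg (Finset.range_subset_range.2 hMs)
        fun _ _ _ => le_max_left _ _

theorem rlen_coeff_le {n : ℕ} (D : MvPolynomial (Fin (n + 1)) ℝ) (G : MvPolynomial (Fin n) ℝ)
    (k : ℕ) (h : ∀ K, coeff K G = coeff (Finsupp.cons k K) D) : rlen G ≤ rlen D := by
  classical
  have hinj : Function.Injective (fun K : Fin n →₀ ℕ => Finsupp.cons k K) := by
    intro a b hab
    have := congrArg Finsupp.tail hab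
    simpa using this
  rw [rlen, Finset.sum_congr rfl fun K _ => by rw [h K]]
  refine (Finset.sum_map G.support ⟨_, hinj⟩ (fun J => |coeff J D|)).symm.le.trans ?_
  refine Finset.sum_le_sum_of_subset_of_nonneg ?_ fun _ _ _ => abs_nonneg _
  intro J hJ
  obtain ⟨K, hK, rfl⟩ := Finset.mem_map.1 hJ
  rw [mem_support_iff] at hK ⊢
  show coeff (Finsupp.cons k K) D ≠ 0
  rwa [← h K]

end


noncomputable section
open MvPolynomial

theorem det_step {n : ℕ} (P : MvPolynomial (Fin (n + 1)) ℝ) (hP : P ≠ 0) (r0 : ℕ)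
    (hr : P.degreeOf 0 ≤ r0) :
    ∃ s : ℕ, 0 < s ∧ s ≤ r0 + 1 ∧ ∃ I : Fin s → (Fin n →₀ ℕ), (∀ i, ∑ j, I i j < s) ∧
      ∃ (Ψ : Polynomial ℝ) (Φ : MvPolynomial (Fin n) ℝ), Ψ ≠ 0 ∧ Φ ≠ 0 ∧
        (Matrix.of fun (i j : Fin s) => rhd (Finsupp.cons (j : ℕ) (I i)) P).det = rtens Ψ Φ := by
  obtain ⟨s, hs, ψ, φ, hψ, hφ, hPe⟩ := mv_separate P r0 hr
  have hs0 : 0 < s := by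
    rcases Nat.eq_zero_or_pos s with rfl | h
    · exfalso; apply hP; rw [hPe]; simp
    · exact h
  obtain ⟨I, hI, hdet⟩ := mv_wronskian φ hφ
  refine ⟨s, hs0, hs, I, hI, _, _, poly_wronskian ψ hψ, hdet, ?_⟩
  rw [rtens_eq, RingHom.map_det, RingHom.map_det, ← Matrix.det_mul]
  congr 1
  ext1 i j
  rw [Matrix.of_apply, Matrix.mul_apply]
  conv_lhs => rw [hPe, map_sum]
  refine Finset.sum_congr rfl fun k _ => ?_
  rw [rhd_rtens, rtens_eq]
  rfl

theorem degreeOf_pos_aux {n : ℕ} (D : MvPolynomial (Fin (n + 1)) ℤ) (k : ℕ) (l : Fin n) :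
    ((finSuccEquiv ℤ n D).coeff k).degreeOf l ≤ D.degreeOf l.succ :=
  degreeOf_coeff_finSuccEquiv D l k

def slice0 {n : ℕ} (D : MvPolynomial (Fin (n + 1)) ℤ) (K : Fin n →₀ ℕ) : Polynomial ℤ :=
  ∑ k ∈ Finset.range (D.degreeOf 0 + 1), Polynomial.monomial k (coeff (Finsupp.cons k K) D)

theorem slice0_coeff {n : ℕ} (D : MvPolynomial (Fin (n + 1)) ℤ) (K : Fin n →₀ ℕ) (k : ℕ) :
    (slice0 D K).coeff k = coeff (Finsupp.cons k K) D := by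
  simp only [slice0, Polynomial.finsetSum_coeff, Polynomial.coeff_monomial, Finset.sum_ite_eq',
    Finset.mem_range]
  split_ifs with h
  · rfl
  · symm
    by_contra hc
    have := (degreeOf_le_iff (n := 0) (f := D) (d := D.degreeOf 0)).1 le_rfl _ (mem_support_iff.2 hc)
    simp at this
    omega

end


noncomputable section
open MvPolynomial

abbrev icr : ℤ →+* ℝ := Int.castRingHom ℝ

def RothLem (m : ℕ) (ε ω : ℝ) : Prop :=
  ∀ (r : Fin m → ℕ) (p : Fin m → ℤ) (q : Fin m → ℕ) (L : ℝ) (P : MvPolynomial (Fin m) ℤ),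
    0 < L → (∀ j, L ≤ r j * Real.log (q j)) → (∀ j, IsCoprime (p j) (q j : ℤ)) →
    (∀ j, (r j : ℝ) ≤ ω * L) → (∀ i j, i < j → (r i : ℝ) ≤ ω * r j) → P ≠ 0 →
    (∀ j, degreeOf j P ≤ r j) → rlen (map icr P) ≤ Real.exp (ω * L) →
    ¬ RIdx (fun j => 1 / (r j : ℝ)) (fun j => (p j : ℝ) / q j) ε (map icr P)

theorem two_le_exp_one : (2 : ℝ) ≤ Real.exp 1 := by
  have := Real.add_one_le_exp (1 : ℝ); linarith

theorem rlen_D_bound {n s : ℕ} (r : Fin (n + 1) → ℕ) (L ω : ℝ) (hL : 0 < L) (hω : 0 < ω)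
    (P : MvPolynomial (Fin (n + 1)) ℝ) (hr : ∀ j, (r j : ℝ) ≤ ω * L)
    (hd : ∀ j, degreeOf j P ≤ r j) (hP : rlen P ≤ Real.exp (ω * L)) (hs : s ≤ r 0 + 1)
    (I : Fin s → (Fin n →₀ ℕ)) :
    rlen (Matrix.of fun (i j : Fin s) => rhd (Finsupp.cons (j : ℕ) (I i)) P).det ≤
      Real.exp (s * ((n + 3) * ω) * L) := by
  have h2 : (2 : ℝ) ^ (∑ j, r j) ≤ Real.exp ((n + 1) * (ω * L)) := by
    have h3 : ((∑ j, r j : ℕ) : ℝ) ≤ (n + 1) * (ω * L) := by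
      push_cast
      refine (Finset.sum_le_sum fun j _ => hr j).trans ?_
      simp
    calc (2 : ℝ) ^ (∑ j, r j) ≤ (Real.exp 1) ^ (∑ j, r j) := by
          gcongr; exact two_le_exp_one
      _ = Real.exp ((∑ j, r j : ℕ) : ℝ) := by rw [← Real.exp_nat_mul, mul_one]
      _ ≤ _ := Real.exp_le_exp.2 h3
  have h4 : (s.factorial : ℝ) ≤ Real.exp (ω * L) ^ s := by
    have a1 : (s.factorial : ℝ) ≤ (s : ℝ) ^ s := by exact_mod_cast Nat.factorial_le_pow s
    refine a1.trans ?_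
    gcongr
    calc (s : ℝ) ≤ r 0 + 1 := by exact_mod_cast hs
      _ ≤ Real.exp (r 0) := Real.add_one_le_exp _
      _ ≤ _ := Real.exp_le_exp.2 (hr 0)
  refine (rlen_det _ (Real.exp ((n + 1) * (ω * L)) * Real.exp (ω * L)) ?_).trans ?_
  · intro i j
    rw [Matrix.of_apply]
    refine (rlen_rhd _ _ r hd).trans ?_
    gcongr
    exact rlen_nonneg _
  · calc (s.factorial : ℝ) * (Real.exp ((n + 1) * (ω * L)) * Real.exp (ω * L)) ^ s
        ≤ Real.exp (ω * L) ^ s * (Real.exp ((n + 1) * (ω * L)) * Real.exp (ω * L)) ^ s := by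
          gcongr
      _ = _ := by
          rw [← mul_pow, ← Real.exp_add, ← Real.exp_add, ← Real.exp_nat_mul]
          congr 1; ring

theorem roth_lemma (m : ℕ) : ∀ ε > (0 : ℝ), ∃ ω > (0 : ℝ), RothLem m ε ω := by
  induction m with
  | zero =>
    intro ε hε
    refine ⟨1, one_pos, ?_⟩
    intro r p q L P hL h1 h2 h3 h4 hP h5 h6 hidx
    have hP' : rsh (fun j => (p j : ℝ) / q j) (map icr P) ≠ 0 := by
      intro h
      apply hP
      have h7 : map icr P = 0 := rsh_inj _ _ h
      exact map_injective icr (RingHom.injective_int _) (by rw [h7, map_zero])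
    obtain ⟨K, hK⟩ := ne_zero_iff.1 hP'
    have := hidx K hK
    simp at this
    linarith
  | succ n ih =>
    intro ε₀ hε₀
    obtain ⟨ε, hε, hε1, hεε⟩ : ∃ ε : ℝ, 0 < ε ∧ ε ≤ 1 ∧ ε ≤ ε₀ :=
      ⟨min ε₀ 1, lt_min hε₀ one_pos, min_le_right _ _, min_le_left _ _⟩
    obtain ⟨ω', hω', hIH⟩ := ih (ε ^ 2 / 64) (by positivity)
    refine ⟨min ω' (ε ^ 2 / 64) / (n + 4), by positivity, ?_⟩
    set ω := min ω' (ε ^ 2 / 64) / ((n : ℝ) + 4) with hωdef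
    have hω : 0 < ω := by positivity
    have hωn : ((n : ℝ) + 4) * ω = min ω' (ε ^ 2 / 64) := by
      rw [hωdef]; field_simp
    have hn0 : (0 : ℝ) ≤ n := Nat.cast_nonneg _
    have hω1 : (n + 3) * ω ≤ ω' := by
      have : ((n : ℝ) + 4) * ω ≤ ω' := hωn.le.trans (min_le_left _ _)
      linarith
    have hω2 : (n + 3) * ω ≤ ε ^ 2 / 64 := by
      have : ((n : ℝ) + 4) * ω ≤ ε ^ 2 / 64 := hωn.le.trans (min_le_right _ _)
      linarith
    have hω3 : ω ≤ ω' := by nlinarith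
    have hω4 : ω ≤ ε / 64 := by
      have : ω ≤ (n + 3) * ω := by nlinarith
      nlinarith
    intro r p q L P0 hL hLr hpq hrL hrr hP0 hdeg hlen hidx
    set P := map icr P0 with hPdef
    have hrpos : ∀ j, 0 < r j := by
      intro j
      rcases Nat.eq_zero_or_pos (r j) with h | h
      · have := hLr j; rw [h] at this; simp at this; linarith
      · exact h
    have hrposR : ∀ j, (0 : ℝ) < r j := fun j => by exact_mod_cast hrpos j
    have hlogpos : ∀ j, 0 < Real.log (q j) := by
      intro j
      by_contra hc
      have := hLr j
      nlinarith [hrposR j]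
    have hqpos : ∀ j, 0 < q j := by
      intro j
      rcases Nat.eq_zero_or_pos (q j) with h | h
      · have := hlogpos j; rw [h] at this; simp at this
      · exact h
    have hP : P ≠ 0 := by
      intro h
      exact hP0 (map_injective icr (RingHom.injective_int _) (by rw [map_zero]; exact h))
    have hdegP : ∀ j, degreeOf j P ≤ r j := fun j =>
      le_trans (degreeOf_le_iff.2 fun K hK => by
        have := support_map_subset icr P0 hK
        exact degreeOf_le_iff.1 le_rfl K this) (hdeg j)
    obtain ⟨s, hs0, hs, I, hI, Ψ, Φ, hΨ, hΦ, hD⟩ := det_step P hP (r 0) (hdegP 0)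
    have hlenD := rlen_D_bound (s := s) r L ω hL hω P hrL hdegP hlen hs I
    set D0 := (Matrix.of fun (i j : Fin s) => rhd (Finsupp.cons (j : ℕ) (I i)) P0).det with hD0
    have hmapD : map icr D0 = (Matrix.of fun (i j : Fin s) => rhd (Finsupp.cons (j : ℕ) (I i)) P).det := by
      rw [hD0, RingHom.map_det]
      congr 1
      ext1 i j
      exact rhd_map _ _ _
    rw [← hmapD] at hlenD hD
    have hs0R : (0 : ℝ) < s := by exact_mod_cast hs0
    have hdegD : ∀ l, degreeOf l D0 ≤ s * r l := fun l => degreeOf_det _ l _ fun i j => by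
      rw [Matrix.of_apply]; exact (degreeOf_rhd _ _ _).trans (hdeg l)
    have hcoef : ∀ k K, ((coeff (Finsupp.cons k K) D0 : ℤ) : ℝ) = Ψ.coeff k * coeff K Φ := by
      intro k K
      rw [← rtens_coeff, ← hD, coeff_map]; rfl
    -- the n-variable factor
    obtain ⟨k1, hk1⟩ : ∃ k, Ψ.coeff k ≠ 0 := by
      by_contra hc; push Not at hc; exact hΨ (Polynomial.ext fun k => by simp [hc k])
    obtain ⟨K1, hK1⟩ := ne_zero_iff.1 hΦ
    set G0 := (finSuccEquiv ℤ n D0).coeff k1 with hG0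
    have hG0c : ∀ K, coeff K G0 = coeff (Finsupp.cons k1 K) D0 := fun K =>
      finSuccEquiv_coeff_coeff _ _ _
    have hG0map : map icr G0 = Ψ.coeff k1 • Φ := by
      ext K
      rw [coeff_map, hG0c, coeff_smul, smul_eq_mul, ← hcoef]; rfl
    have hG0ne : G0 ≠ 0 := by
      intro h
      have := hcoef k1 K1
      rw [← hG0c, h, coeff_zero, Int.cast_zero] at this
      exact mul_ne_zero hk1 hK1 this.symm
    have hex1 : ∃ K', coeff K' (rsh (fun l : Fin n => (p l.succ : ℝ) / q l.succ) Φ) ≠ 0 ∧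
        ∑ l : Fin n, (K' l : ℝ) * (1 / r l.succ) < s * (ε ^ 2 / 64) := by
      have h := hIH (fun l => s * r l.succ) (fun l => p l.succ) (fun l => q l.succ) (s * L) G0
        (by positivity)
        (fun l => by
          push_cast
          rw [mul_assoc]; exact mul_le_mul_of_nonneg_left (hLr _) hs0R.le)
        (fun l => hpq _)
        (fun l => by
          push_cast
          have := hrL l.succ
          have h2 : (r l.succ : ℝ) ≤ ω' * L := this.trans (by gcongr)
          nlinarith)
        (fun i j hij => by
          push_cast
          have := hrr i.succ j.succ (Fin.succ_lt_succ_iff.2 hij)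
          have h2 : (r i.succ : ℝ) ≤ ω' * r j.succ := this.trans (by gcongr)
          nlinarith)
        hG0ne
        (fun l => (degreeOf_pos_aux D0 k1 l).trans (hdegD _))
        (by
          refine (rlen_coeff_le (map icr D0) (map icr G0) k1 fun K => ?_).trans (hlenD.trans ?_)
          · rw [coeff_map, coeff_map, hG0c]
          · apply Real.exp_le_exp.2
            nlinarith [mul_pos hs0R hL, mul_le_mul_of_nonneg_right hω1 (mul_pos hs0R hL).le])
      unfold RIdx at h
      push Not at h
      obtain ⟨K', hK', hlt⟩ := h
      refine ⟨K', ?_, ?_⟩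
      · intro h0
        apply hK'
        rw [hG0map, map_smul, coeff_smul, h0, smul_zero]
      · have : ∑ l : Fin n, (K' l : ℝ) * (1 / r l.succ) =
            s * ∑ l : Fin n, (K' l : ℝ) * (1 / ((s * r l.succ : ℕ) : ℝ)) := by
          rw [Finset.mul_sum]
          refine Finset.sum_congr rfl fun l _ => ?_
          push_cast
          have := hrposR l.succ
          field_simp
        rw [this]
        exact mul_lt_mul_of_pos_left hlt hs0R
    -- the one-variable factor
    have hex2 : ∃ k, (Polynomial.taylor ((p 0 : ℝ) / q 0) Ψ).coeff k ≠ 0 ∧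
        (k : ℝ) * (1 / r 0) ≤ s * (ε ^ 2 / 64) := by
      set H0 := slice0 D0 K1 with hH0
      have hmap : H0.map icr = coeff K1 Φ • Ψ := by
        ext k
        rw [Polynomial.coeff_map, slice0_coeff, Polynomial.coeff_smul, smul_eq_mul, mul_comm,
          ← hcoef]; rfl
      have hH0ne : H0 ≠ 0 := by
        intro h
        rw [h, Polynomial.map_zero] at hmap
        exact (smul_ne_zero hK1 hΨ) hmap.symm
      obtain ⟨k, hk, hkq⟩ := one_var_bound H0 hH0ne (p 0) (q 0) (hqpos 0) (hpq 0)
      refine ⟨k, ?_, ?_⟩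
      · intro h
        apply hk
        rw [hmap, map_smul, Polynomial.coeff_smul, h, smul_zero]
      · have h1 : |(H0.leadingCoeff : ℝ)| ≤ rlen (map icr D0) := by
          rw [Polynomial.leadingCoeff, hH0, slice0_coeff]
          have := coeff_le_rlen (map icr D0) (Finsupp.cons H0.natDegree K1)
          rwa [coeff_map] at this
        have h2 := (hkq.trans h1).trans hlenD
        have h3 : (k : ℝ) * Real.log (q 0) ≤ s * ((n + 3) * ω) * L := by
          have hq0 : (0 : ℝ) < q 0 := by exact_mod_cast hqpos 0
          have := Real.log_le_log (by positivity) h2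
          rwa [Real.log_exp, Real.log_pow] at this
        have h4 : (k : ℝ) * Real.log (q 0) ≤ (s * (ε ^ 2 / 64) * r 0) * Real.log (q 0) := by
          calc _ ≤ s * ((n + 3) * ω) * L := h3
            _ ≤ s * (ε ^ 2 / 64) * (r 0 * Real.log (q 0)) := by
                gcongr
                exact hLr 0
            _ = _ := by ring
        have h5 := le_of_mul_le_mul_right h4 (hlogpos 0)
        rw [mul_one_div, div_le_iff₀ (hrposR 0)]
        exact h5
    obtain ⟨K', hK', hlt⟩ := hex1
    obtain ⟨k, hk, hkle⟩ := hex2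
    -- the lower bound
    have hidxD : RIdx (fun j => 1 / (r j : ℝ)) (fun j => (p j : ℝ) / q j)
        (∑ j : Fin s, max 0 (ε - ω - (j : ℝ) * (1 / (r 0 : ℝ)))) (map icr D0) := by
      have hw : ∀ j, 0 ≤ 1 / (r j : ℝ) := fun j => by positivity
      rw [hmapD]
      refine RIdx.det hw _ (fun j => max 0 (ε - ω - (j : ℝ) * (1 / (r 0 : ℝ)))) fun i j => ?_
      rw [Matrix.of_apply]
      rcases le_total (ε - ω - (j : ℝ) * (1 / (r 0 : ℝ))) 0 with h | h
      · exact RIdx.of_nonpos hw (by rw [max_eq_left h]) _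
      · rw [max_eq_right h]
        refine ((hidx.mono hεε).rhd (Finsupp.cons (j : ℕ) (I i))).mono ?_
        rw [Fin.sum_univ_succ]
        simp only [Finsupp.cons_zero, Finsupp.cons_succ]
        have h1 : ∑ l : Fin n, (I i l : ℝ) * (1 / (r l.succ : ℝ)) ≤ ω := by
          calc ∑ l : Fin n, (I i l : ℝ) * (1 / (r l.succ : ℝ))
              ≤ ∑ l : Fin n, (I i l : ℝ) * (ω / r 0) := by
                refine Finset.sum_le_sum fun l _ => ?_
                refine mul_le_mul_of_nonneg_left ?_ (Nat.cast_nonneg _)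
                rw [div_le_div_iff₀ (hrposR _) (hrposR _)]
                have := hrr 0 l.succ (Fin.succ_pos l)
                linarith
            _ = ((∑ l, I i l : ℕ) : ℝ) * (ω / r 0) := by
                rw [← Finset.sum_mul]; push_cast; rfl
            _ ≤ (r 0 : ℝ) * (ω / r 0) := by
                have : ∑ l, I i l ≤ r 0 := by have := hI i; omega
                have h0 := hrposR 0
                gcongr
            _ = ω := by have := hrposR 0; field_simp
        linarith
    have hfin := hidxD (Finsupp.cons k K') (by
      have e : (fun j => (p j : ℝ) / q j) = (Fin.cons ((p 0 : ℝ) / q 0)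
          (fun l : Fin n => (p l.succ : ℝ) / q l.succ) : Fin (n + 1) → ℝ) := by
        ext j; refine Fin.cases ?_ (fun l => ?_) j <;> simp
      rw [e, hD, rsh_rtens, rtens_coeff]
      exact mul_ne_zero hk hK')
    have hsum := sum_theta s (r 0) hs (hrpos 0) ε ω hε hε1 hω4
    rw [Fin.sum_univ_succ] at hfin
    simp only [Finsupp.cons_zero, Finsupp.cons_succ] at hfin
    have : (0 : ℝ) < s * ε ^ 2 := by positivity
    linarith

end


noncomputable section
open MvPolynomial

theorem int_pow_rep (α : ℝ) (hα : IsIntegral ℤ α) :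
    ∃ d : ℕ, 0 < d ∧ ∃ A : ℝ, 1 ≤ A ∧ ∃ c : ℕ → ℕ → ℤ, ∀ k,
      α ^ k = ∑ i ∈ Finset.range d, (c k i : ℝ) * α ^ i ∧ ∀ i, |(c k i : ℝ)| ≤ A ^ k := by
  obtain ⟨f, hf, hroot⟩ := hα
  have hd : 0 < f.natDegree := by
    rcases Nat.eq_zero_or_pos f.natDegree with h | h
    · rw [hf.natDegree_eq_zero] at h
      rw [h] at hroot; simp at hroot
    · exact h
  obtain ⟨e, he⟩ : ∃ e, f.natDegree = e + 1 := ⟨f.natDegree - 1, by omega⟩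
  have hrel : α ^ (e + 1) = - ∑ i ∈ Finset.range (e + 1), (f.coeff i : ℝ) * α ^ i := by
    rw [Polynomial.eval₂_eq_sum_range, he, Finset.sum_range_succ] at hroot
    have h1 : f.coeff (e + 1) = 1 := by rw [← he]; exact hf.coeff_natDegree
    rw [h1] at hroot
    simp only [eq_intCast, Int.cast_one, one_mul] at hroot
    linarith
  set A : ℝ := 1 + ∑ i ∈ Finset.range (f.natDegree + 1), |(f.coeff i : ℝ)| with hA
  have hA1 : 1 ≤ A := by
    rw [hA]; have : 0 ≤ ∑ i ∈ Finset.range (f.natDegree + 1), |(f.coeff i : ℝ)| :=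
      Finset.sum_nonneg fun _ _ => abs_nonneg _
    linarith
  have hcf : ∀ i, 1 + |(f.coeff i : ℝ)| ≤ A := by
    intro i
    by_cases hi : i < f.natDegree + 1
    · rw [hA]
      have := Finset.single_le_sum (f := fun i => |(f.coeff i : ℝ)|) (fun _ _ => abs_nonneg _)
        (Finset.mem_range.2 hi)
      linarith
    · rw [Polynomial.coeff_eq_zero_of_natDegree_lt (by omega)]; simpa using hA1
  refine ⟨e + 1, by omega, A, hA1, ?_⟩
  have key : ∀ k, ∃ c : ℕ → ℤ, α ^ k = ∑ i ∈ Finset.range (e + 1), (c i : ℝ) * α ^ i ∧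
      ∀ i, |(c i : ℝ)| ≤ A ^ k := by
    intro k
    induction k with
    | zero =>
      refine ⟨fun i => if i = 0 then 1 else 0, ?_, ?_⟩
      · rw [Finset.sum_range_succ']; simp
      · intro i; by_cases h : i = 0 <;> simp [h]
    | succ k ih =>
      obtain ⟨c, hc, hb⟩ := ih
      refine ⟨fun i => (if i = 0 then 0 else c (i - 1)) - c e * f.coeff i, ?_, ?_⟩
      · have h1 : ∑ i ∈ Finset.range (e + 1),
            (((if i = 0 then 0 else c (i - 1)) - c e * f.coeff i : ℤ) : ℝ) * α ^ i =
            ∑ i ∈ Finset.range (e + 1), ((if i = 0 then 0 else c (i - 1) : ℤ) : ℝ) * α ^ i -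
            c e * ∑ i ∈ Finset.range (e + 1), (f.coeff i : ℝ) * α ^ i := by
          rw [Finset.mul_sum, ← Finset.sum_sub_distrib]
          refine Finset.sum_congr rfl fun i _ => ?_
          push_cast; ring
        rw [h1, Finset.sum_range_succ' (fun i => ((if i = 0 then 0 else c (i - 1) : ℤ) : ℝ) * α ^ i)]
        simp only [Nat.add_eq_zero_iff, one_ne_zero, and_false, if_false, if_true, Int.cast_zero,
          zero_mul, add_zero, Nat.add_sub_cancel]
        have h2 : ∑ i ∈ Finset.range (e + 1), (f.coeff i : ℝ) * α ^ i = - α ^ (e + 1) := by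
          rw [hrel, neg_neg]
        rw [h2, pow_succ, hc, Finset.sum_range_succ, add_mul, Finset.sum_mul]
        have : ∀ i ∈ Finset.range e, (c i : ℝ) * α ^ i * α = c i * α ^ (i + 1) := fun i _ => by ring
        rw [Finset.sum_congr rfl this]; ring
      · intro i
        push_cast
        have h1 : |(((if i = 0 then 0 else c (i - 1)) : ℤ) : ℝ)| ≤ A ^ k := by
          split_ifs
          · simp; positivity
          · exact hb _
        calc _ ≤ A ^ k + A ^ k * |(f.coeff i : ℝ)| := by
              refine (abs_sub _ _).trans (add_le_add ?_ ?_)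
              · simpa using h1
              · rw [abs_mul]; gcongr; exact hb e
          _ = A ^ k * (1 + |(f.coeff i : ℝ)|) := by ring
          _ ≤ A ^ k * A := by gcongr; exact hcf i
          _ = _ := (pow_succ _ _).symm
  choose c hc using key
  exact ⟨c, hc⟩

theorem sum_exp_le (r : ℕ) (hr : 0 < r) (l : ℝ) :
    ∑ i : Fin (r + 1), Real.exp (l * (1 / 2 - (i : ℝ) / r)) ≤ (r + 1) * Real.exp (l ^ 2 / 8) := by
  have hr' : (0 : ℝ) < r := by exact_mod_cast hr
  have h1 : ∑ i : Fin (r + 1), Real.exp (l * (1 / 2 - (i : ℝ) / r)) =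
      ∑ i : Fin (r + 1), Real.exp (-(l * (1 / 2 - (i : ℝ) / r))) := by
    rw [← Equiv.sum_comp Fin.revPerm]
    refine Finset.sum_congr rfl fun i _ => ?_
    congr 1
    rw [Fin.revPerm_apply, Fin.val_rev]
    have : ((r + 1 - (i + 1) : ℕ) : ℝ) = r - i := by
      rw [Nat.cast_sub (by omega)]; push_cast; ring
    rw [this]; field_simp; ring
  have h2 : ∑ i : Fin (r + 1), Real.exp (l * (1 / 2 - (i : ℝ) / r)) =
      ∑ i : Fin (r + 1), Real.cosh (l * (1 / 2 - (i : ℝ) / r)) := by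
    simp_rw [Real.cosh_eq]
    rw [← Finset.sum_div, Finset.sum_add_distrib, ← h1]; ring
  rw [h2]
  have h3 : ∀ i ∈ (Finset.univ : Finset (Fin (r + 1))),
      Real.cosh (l * (1 / 2 - (i : ℝ) / r)) ≤ Real.exp (l ^ 2 / 8) := by
    intro i _
    refine (Real.cosh_le_exp_half_sq _).trans (Real.exp_le_exp.2 ?_)
    have hi : (i : ℝ) ≤ r := by exact_mod_cast Nat.lt_succ_iff.1 i.2
    have a1 : 0 ≤ (i : ℝ) / r := by positivity
    have a2 : (i : ℝ) / r ≤ 1 := by rw [div_le_one hr']; exact hi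
    have a3 : (1 / 2 - (i : ℝ) / r) ^ 2 ≤ 1 / 4 := by nlinarith
    rw [mul_pow]; nlinarith [sq_nonneg l]
  refine (Finset.sum_le_sum h3).trans ?_
  simp

theorem box_count {m : ℕ} (r : Fin m → ℕ) (hr : ∀ j, 0 < r j) (δ : ℝ) (hδ : 0 < δ) :
    ((Finset.univ.filter fun I : (∀ j, Fin (r j + 1)) =>
      ∑ j, ((I j : ℕ) : ℝ) * (1 / (r j : ℝ)) < m * (1 / 2 - δ)).card : ℝ) ≤
      (∏ j, ((r j : ℝ) + 1)) * Real.exp (-2 * δ ^ 2 * m) := by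
  classical
  set S := Finset.univ.filter fun I : (∀ j, Fin (r j + 1)) =>
      ∑ j, ((I j : ℕ) : ℝ) * (1 / (r j : ℝ)) < m * (1 / 2 - δ) with hS
  have h1 : (S.card : ℝ) * Real.exp (4 * δ ^ 2 * m) ≤
      ∑ I : (∀ j, Fin (r j + 1)), ∏ j, Real.exp (4 * δ * (1 / 2 - ((I j : ℕ) : ℝ) / r j)) := by
    calc (S.card : ℝ) * Real.exp (4 * δ ^ 2 * m) = ∑ I ∈ S, Real.exp (4 * δ ^ 2 * m) := by simp
      _ ≤ ∑ I ∈ S, ∏ j, Real.exp (4 * δ * (1 / 2 - ((I j : ℕ) : ℝ) / r j)) := by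
          refine Finset.sum_le_sum fun I hI => ?_
          rw [hS, Finset.mem_filter] at hI
          rw [← Real.exp_sum, ← Finset.mul_sum, Finset.sum_sub_distrib]
          apply Real.exp_le_exp.2
          have h2 := hI.2
          simp only [mul_one_div] at h2
          simp only [Finset.sum_const, Finset.card_univ, Fintype.card_fin, nsmul_eq_mul]
          nlinarith
      _ ≤ _ := Finset.sum_le_sum_of_subset_of_nonneg (Finset.subset_univ _) fun _ _ _ => by
          positivity
  have h2 : ∑ I : (∀ j, Fin (r j + 1)), ∏ j, Real.exp (4 * δ * (1 / 2 - ((I j : ℕ) : ℝ) / r j)) =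
      ∏ j, ∑ i : Fin (r j + 1), Real.exp (4 * δ * (1 / 2 - ((i : ℕ) : ℝ) / r j)) := by
    rw [Finset.prod_univ_sum, Fintype.piFinset_univ]
  have h3 : ∏ j, ∑ i : Fin (r j + 1), Real.exp (4 * δ * (1 / 2 - ((i : ℕ) : ℝ) / r j)) ≤
      ∏ j, (((r j : ℝ) + 1) * Real.exp ((4 * δ) ^ 2 / 8)) :=
    Finset.prod_le_prod (fun j _ => by positivity) fun j _ => sum_exp_le (r j) (hr j) _
  rw [Finset.prod_mul_distrib, Finset.prod_const, Finset.card_univ, Fintype.card_fin,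
    ← Real.exp_nat_mul] at h3
  have h4 := h1.trans (h2.le.trans h3)
  have e : Real.exp (-2 * δ ^ 2 * m) = Real.exp (m * ((4 * δ) ^ 2 / 8)) / Real.exp (4 * δ ^ 2 * m) := by
    rw [← Real.exp_sub]; congr 1; ring
  rw [e, mul_div_assoc', le_div_iff₀ (Real.exp_pos _)]
  exact h4

end


noncomputable section
open MvPolynomial

theorem siegel_simple {E V : Type} [Fintype E] [Fintype V] (A : Matrix E V ℤ) (M : ℝ) (hM : 1 ≤ M)
    (hA : ∀ i j, |(A i j : ℝ)| ≤ M) (hE : 0 < Fintype.card E)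
    (hc : 2 * Fintype.card E ≤ Fintype.card V) :
    ∃ t : V → ℤ, t ≠ 0 ∧ (∀ i, ∑ j, A i j * t j = 0) ∧ ∀ j, |(t j : ℝ)| ≤ Fintype.card V * M := by
  letI : NormedAddCommGroup (Matrix E V ℤ) := Matrix.normedAddCommGroup
  obtain ⟨t, ht0, ht, htn⟩ := Int.Matrix.exists_ne_zero_int_vec_norm_le A (by omega) hE
  refine ⟨t, ht0, fun i => congrFun ht i, fun j => ?_⟩
  have h1 : |(t j : ℝ)| ≤ ‖t‖ := by
    have := norm_le_pi_norm t j
    rwa [Int.norm_eq_abs] at this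
  have hAn : ‖A‖ ≤ M := by
    rw [Matrix.norm_le_iff (by linarith)]
    intro i j; rw [Int.norm_eq_abs]; exact hA i j
  have hV : (2 : ℝ) * Fintype.card E ≤ Fintype.card V := by exact_mod_cast hc
  have hE' : (1 : ℝ) ≤ Fintype.card E := by exact_mod_cast hE
  refine h1.trans (htn.trans ?_)
  have hb : 1 ≤ (Fintype.card V : ℝ) * max 1 ‖A‖ := by
    have := le_max_left 1 ‖A‖
    nlinarith
  calc _ ≤ ((Fintype.card V : ℝ) * max 1 ‖A‖) ^ (1 : ℝ) := by
        apply Real.rpow_le_rpow_of_exponent_le hb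
        rw [div_le_one (by linarith)]; linarith
    _ = (Fintype.card V : ℝ) * max 1 ‖A‖ := Real.rpow_one _
    _ ≤ _ := by
        gcongr
        exact max_le hM hAn

def bfin {m : ℕ} {r : Fin m → ℕ} (J : ∀ j, Fin (r j + 1)) : Fin m →₀ ℕ :=
  Finsupp.equivFunOnFinite.symm fun j => (J j : ℕ)

theorem bfin_apply {m : ℕ} {r : Fin m → ℕ} (J : ∀ j, Fin (r j + 1)) (j : Fin m) :
    bfin J j = (J j : ℕ) := rfl

theorem bfin_inj {m : ℕ} {r : Fin m → ℕ} : Function.Injective (bfin (r := r)) := by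
  intro J J' h
  funext j
  exact Fin.ext (DFunLike.congr_fun h j)

theorem aux_poly (α : ℝ) (hα : IsIntegral ℤ α) : ∃ d : ℕ, ∃ B : ℝ, 1 ≤ B ∧ 0 < d ∧
    ∀ (m : ℕ) (δ : ℝ), 0 < m → 0 < δ → δ < 1 / 2 → d * Real.exp (-2 * δ ^ 2 * m) ≤ 1 / 2 →
    ∀ r : Fin m → ℕ, (∀ j, 0 < r j) → ∃ P : MvPolynomial (Fin m) ℤ, P ≠ 0 ∧
      (∀ j, degreeOf j P ≤ r j) ∧ rlen (map icr P) ≤ B ^ (∑ j, r j) ∧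
      RIdx (fun j => 1 / (r j : ℝ)) (fun _ => α) (m * (1 / 2 - δ)) (map icr P) := by
  classical
  obtain ⟨d, hd, A, hA, c, hc⟩ := int_pow_rep α hα
  refine ⟨d, 8 * A, by linarith, hd, ?_⟩
  intro m δ hm hδ hδ2 hdm r hr
  have hm' : (0 : ℝ) < m := by exact_mod_cast hm
  let Box := ∀ j, Fin (r j + 1)
  let S : Finset Box := Finset.univ.filter fun I : (∀ j, Fin (r j + 1)) =>
      ∑ j, ((I j : ℕ) : ℝ) * (1 / (r j : ℝ)) < m * (1 / 2 - δ)
  have hScard := box_count r hr δ hδ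
  change (S.card : ℝ) ≤ _ at hScard
  let N := ∑ j, r j
  have hN : Fintype.card Box = ∏ j, (r j + 1) := by simp [Box]
  have hN2 : (Fintype.card Box : ℝ) ≤ 2 ^ N := by
    rw [hN]
    have : ∏ j, (r j + 1) ≤ ∏ j, 2 ^ (r j) := Finset.prod_le_prod' fun j _ => Nat.lt_two_pow_self
    rw [Finset.prod_pow_eq_pow_sum] at this
    exact_mod_cast this
  let Mx : Matrix (S × Fin d) Box ℤ := fun Ii J =>
    (∏ j, ((J j : ℕ).choose (Ii.1.1 j : ℕ) : ℤ)) * c (∑ j, ((J j : ℕ) - (Ii.1.1 j : ℕ))) Ii.2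
  have hMx : ∀ i j, |(Mx i j : ℝ)| ≤ (2 * A) ^ N := by
    rintro ⟨⟨I, hI⟩, i⟩ J
    simp only [Mx]
    push_cast
    rw [abs_mul, mul_pow]
    gcongr
    · rw [Finset.abs_prod, ← Finset.prod_pow_eq_pow_sum]
      refine Finset.prod_le_prod (fun _ _ => abs_nonneg _) fun j _ => ?_
      rw [Nat.abs_cast]
      have : (J j : ℕ).choose (I j : ℕ) ≤ 2 ^ (r j) :=
        (Nat.choose_le_two_pow _ _).trans (Nat.pow_le_pow_right (by norm_num) (Nat.lt_succ_iff.1 (J j).2))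
      exact_mod_cast this
    · refine ((hc _).2 _).trans (pow_le_pow_right₀ hA ?_)
      exact Finset.sum_le_sum fun j _ => (Nat.sub_le _ _).trans (Nat.lt_succ_iff.1 (J j).2)
  have hE : Fintype.card (S × Fin d) = S.card * d := by simp
  have hS0 : 0 < S.card := by
    refine Finset.card_pos.2 ⟨fun _ => 0, ?_⟩
    simp only [S, Finset.mem_filter, Finset.mem_univ, true_and, Fin.val_zero, Nat.cast_zero,
      zero_mul, Finset.sum_const_zero]
    exact mul_pos hm' (by linarith)
  have hcard2 : 2 * Fintype.card (S × Fin d) ≤ Fintype.card Box := by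
    have h1 : (2 * (S.card * d) : ℝ) ≤ (∏ j, ((r j : ℝ) + 1)) := by
      have hp : (0 : ℝ) ≤ ∏ j, ((r j : ℝ) + 1) := by positivity
      calc (2 * (S.card * d) : ℝ) ≤ 2 * (((∏ j, ((r j : ℝ) + 1)) * Real.exp (-2 * δ ^ 2 * m)) * d) := by
            gcongr
        _ = (∏ j, ((r j : ℝ) + 1)) * (2 * (d * Real.exp (-2 * δ ^ 2 * m))) := by ring
        _ ≤ (∏ j, ((r j : ℝ) + 1)) * 1 := by gcongr; linarith
        _ = _ := mul_one _
    rw [hE, hN]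
    exact_mod_cast h1
  have hA2 : (1 : ℝ) ≤ (2 * A) ^ N := one_le_pow₀ (by linarith)
  obtain ⟨t, ht0, ht, htb⟩ := siegel_simple Mx _ hA2 hMx (by rw [hE]; positivity) hcard2
  let P : MvPolynomial (Fin m) ℤ := ∑ J : Box, monomial (bfin J) (t J)
  have hPc : ∀ J : Box, coeff (bfin J) P = t J := by
    intro J
    simp only [P, coeff_sum, coeff_monomial]
    rw [Finset.sum_eq_single J]
    · simp
    · intro J' _ hne; rw [if_neg]; intro h; exact hne (bfin_inj h)
    · simp
  have hmapP : map icr P = ∑ J : Box, monomial (bfin J) (t J : ℝ) := by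
    simp only [P, map_sum, map_monomial]; rfl
  refine ⟨P, ?_, ?_, ?_, ?_⟩
  · intro h
    apply ht0
    funext J
    rw [← hPc J, h]; rfl
  · intro j
    refine (degreeOf_sum_le _ _ _).trans (Finset.sup_le fun J _ => ?_)
    rw [degreeOf_le_iff]
    intro K hK
    have := Finset.mem_singleton.1 (support_monomial_subset hK)
    rw [this, bfin_apply]; exact Nat.lt_succ_iff.1 (J j).2
  · rw [hmapP]
    refine (rlen_sum _ _).trans ?_
    calc ∑ J : Box, rlen (monomial (bfin J) (t J : ℝ)) ≤ ∑ J : Box, (Fintype.card Box * (2 * A) ^ N) := by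
          refine Finset.sum_le_sum fun J _ => ?_
          rw [rlen_monomial]; exact htb J
      _ = Fintype.card Box * (Fintype.card Box * (2 * A) ^ N) := by simp
      _ ≤ 2 ^ N * (2 ^ N * (2 * A) ^ N) := by gcongr
      _ = (8 * A) ^ N := by rw [← mul_pow, ← mul_pow]; congr 1; ring
  · intro K hK
    by_contra hlt
    push Not at hlt
    apply hK
    rw [hmapP, map_sum, coeff_sum]
    simp_rw [rsh_monomial_coeff]
    by_cases hbox : ∀ j, K j < r j + 1
    · let I : Box := fun j => ⟨K j, hbox j⟩
      have hI : I ∈ S := by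
        simp only [S, Finset.mem_filter, Finset.mem_univ, true_and]
        exact hlt
      have h1 : ∀ J : Box, (t J : ℝ) * ∏ j, (((bfin J j).choose (K j) : ℝ) * α ^ (bfin J j - K j)) =
          ∑ i : Fin d, α ^ (i : ℕ) * ((Mx (⟨I, hI⟩, i) J * t J : ℤ) : ℝ) := by
        intro J
        rw [Finset.prod_mul_distrib, Finset.prod_pow_eq_pow_sum, (hc _).1, Finset.sum_range,
          ← mul_assoc, Finset.mul_sum]
        refine Finset.sum_congr rfl fun i _ => ?_
        simp only [Mx, I, bfin_apply]
        push_cast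
        ring
      simp_rw [h1]
      rw [Finset.sum_comm]
      refine Finset.sum_eq_zero fun i _ => ?_
      rw [← Finset.mul_sum, ← Int.cast_sum, ht, Int.cast_zero, mul_zero]
    · push Not at hbox
      obtain ⟨j, hj⟩ := hbox
      refine Finset.sum_eq_zero fun J _ => ?_
      rw [Finset.prod_eq_zero (Finset.mem_univ j), mul_zero]
      rw [Nat.choose_eq_zero_of_lt, Nat.cast_zero, zero_mul]
      rw [bfin_apply]; have := (J j).2; omega

end


noncomputable section
open MvPolynomial

theorem eval_bound {n : ℕ} (R : MvPolynomial (Fin n) ℝ) (z : Fin n → ℝ) (M : ℝ)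
    (h : ∀ K, coeff K R ≠ 0 → ∏ j, |z j| ^ K j ≤ M) : |eval z R| ≤ rlen R * M := by
  rw [eval_eq', rlen, Finset.sum_mul]
  refine (Finset.abs_sum_le_sum_abs _ _).trans (Finset.sum_le_sum fun K hK => ?_)
  rw [abs_mul, Finset.abs_prod]
  simp_rw [abs_pow]
  exact mul_le_mul_of_nonneg_left (h K (mem_support_iff.1 hK)) (abs_nonneg _)

theorem eval_denom {n : ℕ} (Q : MvPolynomial (Fin n) ℤ) (r : Fin n → ℕ) (p : Fin n → ℤ)
    (q : Fin n → ℕ) (hq : ∀ j, 0 < q j) (hr : ∀ j, degreeOf j Q ≤ r j) :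
    ∃ N : ℤ, eval (fun j => (p j : ℝ) / q j) (map icr Q) * ∏ j, (q j : ℝ) ^ r j = N := by
  refine ⟨∑ K ∈ Q.support, coeff K Q * ∏ j, (p j ^ K j * (q j : ℤ) ^ (r j - K j)), ?_⟩
  rw [eval_map, eval₂_eq', Finset.sum_mul]
  push_cast
  refine Finset.sum_congr rfl fun K hK => ?_
  rw [mul_assoc, ← Finset.prod_mul_distrib]
  congr 1
  refine Finset.prod_congr rfl fun j _ => ?_
  have hK' : K j ≤ r j := (degreeOf_le_iff.1 le_rfl K hK).trans (hr j)
  have hq0 : (q j : ℝ) ≠ 0 := by exact_mod_cast (hq j).ne'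
  rw [div_pow]
  rw [← Nat.sub_add_cancel hK', pow_add, Nat.add_sub_cancel]
  field_simp

theorem seq_exists (G : ℤ → ℕ → Prop)
    (H : ∀ T : ℝ, ∃ p q, G p q ∧ T ≤ Real.log (q : ℕ)) (T Λ : ℝ) (hT : 0 < T) (hΛ : 1 ≤ Λ) :
    ∃ (p : ℕ → ℤ) (q : ℕ → ℕ), (∀ k, G (p k) (q k)) ∧ (∀ k, T ≤ Real.log (q k)) ∧
      (∀ k, Real.log (q k) ≤ Real.log (q (k + 1))) ∧
      ∀ i j, i < j → Λ * Real.log (q i) ≤ Real.log (q j) := by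
  choose p q hG hlog using H
  let x : ℕ → ℝ := fun k => Nat.rec T (fun _ u => Λ * Real.log (q u)) k
  have hx : ∀ k, x (k + 1) = Λ * Real.log (q (x k)) := fun k => rfl
  have h1 : ∀ k, T ≤ Real.log (q (x k)) := by
    intro k
    induction k with
    | zero => exact hlog T
    | succ k ih =>
      have := hlog (x (k + 1))
      rw [hx] at this
      rw [hx]
      nlinarith
  have h2 : ∀ k, Λ * Real.log (q (x k)) ≤ Real.log (q (x (k + 1))) := fun k => by
    have := hlog (x (k + 1))
    rwa [hx k] at this ⊢
  have h3 : ∀ k, Real.log (q (x k)) ≤ Real.log (q (x (k + 1))) := fun k => by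
    have := h2 k; have := h1 k; nlinarith
  have hmono : Monotone fun k => Real.log (q (x k)) := monotone_nat_of_le_succ h3
  refine ⟨fun k => p (x k), fun k => q (x k), fun k => hG _, h1, h3, fun i j hij => ?_⟩
  exact (h2 i).trans (hmono hij)

theorem roth_core (α ε : ℝ) (hε : 0 < ε) (hε1 : ε ≤ 1) (m : ℕ) (hm : 0 < m) (ω₂ C L : ℝ)
    (hC : 1 ≤ C) (hω₂ : m * ω₂ * Real.log C ≤ ε / 16) (hL : 0 < L)
    (r : Fin m → ℕ) (p : Fin m → ℤ) (q : Fin m → ℕ) (hq : ∀ j, 0 < q j)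
    (hr : ∀ j, (r j : ℝ) ≤ ω₂ * L) (hr0 : ∀ j, 0 < r j)
    (h1 : ∀ j, L ≤ r j * Real.log (q j)) (h2 : ∀ j, r j * Real.log (q j) ≤ (1 + ε / 16) * L)
    (happ : ∀ j, |α - (p j : ℝ) / q j| ≤ Real.exp (-(2 + ε) * Real.log (q j)))
    (P : MvPolynomial (Fin m) ℤ) (hdeg : ∀ j, degreeOf j P ≤ r j)
    (hlen : ∀ I, rlen (rsh (fun _ => α) (rhd I (map icr P))) ≤ C ^ (∑ j, r j))
    (hidx : RIdx (fun j => 1 / (r j : ℝ)) (fun _ => α) (m * (1 / 2 - ε / 24)) (map icr P))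
    (hnidx : ¬ RIdx (fun j => 1 / (r j : ℝ)) (fun j => (p j : ℝ) / q j) (ε / 24) (map icr P)) :
    False := by
  have hm1 : (1 : ℝ) ≤ m := by exact_mod_cast hm
  unfold RIdx at hnidx
  push Not at hnidx
  obtain ⟨I, hI, hIlt⟩ := hnidx
  set ξ : Fin m → ℝ := fun j => (p j : ℝ) / q j with hξ
  set Q := rhd I (map icr P) with hQ
  have hQξ : eval ξ Q ≠ 0 := by rw [hQ, eval_rhd]; exact hI
  -- lower bound
  obtain ⟨N, hN⟩ := eval_denom (rhd I P) r p q hq fun j => (degreeOf_rhd _ _ _).trans (hdeg j)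
  rw [rhd_map] at hN
  have hprod : ∏ j, (q j : ℝ) ^ r j ≤ Real.exp (m * ((1 + ε / 16) * L)) := by
    have e : ∏ j, (q j : ℝ) ^ r j = Real.exp (∑ j, r j * Real.log (q j)) := by
      rw [Real.exp_sum]
      refine Finset.prod_congr rfl fun j _ => ?_
      rw [Real.exp_nat_mul, Real.exp_log (by exact_mod_cast hq j)]
    rw [e]
    apply Real.exp_le_exp.2
    refine (Finset.sum_le_sum fun j _ => h2 j).trans ?_
    simp
  have hprodpos : 0 < ∏ j, (q j : ℝ) ^ r j := Finset.prod_pos fun j _ => by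
    have : (0 : ℝ) < q j := by exact_mod_cast hq j
    positivity
  have hlow : 1 ≤ |eval ξ Q| * ∏ j, (q j : ℝ) ^ r j := by
    have hN0 : N ≠ 0 := by
      rintro rfl
      rw [Int.cast_zero] at hN
      exact mul_ne_zero hQξ hprodpos.ne' hN
    have : |eval ξ Q * ∏ j, (q j : ℝ) ^ r j| = |(N : ℝ)| := by rw [← hN]
    rw [abs_mul, abs_of_pos hprodpos] at this
    rw [this]
    exact_mod_cast Int.one_le_abs hN0
  -- upper bound
  have hup : |eval ξ Q| ≤ C ^ (∑ j, r j) *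
      Real.exp (-(2 + ε) * (L * (m * (1 / 2 - ε / 24) - ε / 24))) := by
    rw [← eval_rsh (fun _ => α) ξ Q]
    refine (eval_bound _ _ _ ?_).trans (mul_le_mul_of_nonneg_right (hlen I) (Real.exp_pos _).le)
    intro K hK
    have hw := (hidx.rhd I) K hK
    calc ∏ j, |ξ j - α| ^ K j ≤ ∏ j, Real.exp (-(2 + ε) * Real.log (q j)) ^ K j := by
          refine Finset.prod_le_prod (fun j _ => by positivity) fun j _ => ?_
          gcongr
          rw [abs_sub_comm]; exact happ j
      _ = Real.exp (-(2 + ε) * ∑ j, K j * Real.log (q j)) := by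
          rw [Finset.mul_sum, Real.exp_sum]
          refine Finset.prod_congr rfl fun j _ => ?_
          rw [← Real.exp_nat_mul]; congr 1; ring
      _ ≤ _ := by
          apply Real.exp_le_exp.2
          rw [neg_mul, neg_mul, neg_le_neg_iff]
          refine mul_le_mul_of_nonneg_left ?_ (by linarith)
          calc L * (m * (1 / 2 - ε / 24) - ε / 24) ≤ L * ∑ j, (K j : ℝ) * (1 / r j) := by
                gcongr
                linarith
            _ ≤ _ := by
                rw [Finset.mul_sum]
                refine Finset.sum_le_sum fun j _ => ?_
                have hrj : (0 : ℝ) < r j := by exact_mod_cast hr0 j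
                calc L * ((K j : ℝ) * (1 / r j)) = (K j : ℝ) * (L / r j) := by ring
                  _ ≤ _ := by
                    gcongr
                    rw [div_le_iff₀ hrj]; linarith [h1 j]
  have hCr : C ^ (∑ j, r j) ≤ Real.exp (ε / 16 * L) := by
    have hlC : 0 ≤ Real.log C := Real.log_nonneg hC
    have e : C ^ (∑ j, r j) = Real.exp ((∑ j, r j : ℕ) * Real.log C) := by
      rw [Real.exp_nat_mul, Real.exp_log (by linarith)]
    rw [e]
    apply Real.exp_le_exp.2
    calc ((∑ j, r j : ℕ) : ℝ) * Real.log C ≤ (m * (ω₂ * L)) * Real.log C := by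
          gcongr
          push_cast
          refine (Finset.sum_le_sum fun j _ => hr j).trans ?_
          simp
      _ = (m * ω₂ * Real.log C) * L := by ring
      _ ≤ _ := by gcongr
  have hfin : 1 ≤ Real.exp (ε / 16 * L + -(2 + ε) * (L * (m * (1 / 2 - ε / 24) - ε / 24)) +
      m * ((1 + ε / 16) * L)) := by
    rw [Real.exp_add, Real.exp_add]
    refine hlow.trans ?_
    gcongr
    exact hup.trans (by gcongr)
  rw [Real.one_le_exp_iff] at hfin
  have : ε / 16 * L + -(2 + ε) * (L * (m * (1 / 2 - ε / 24) - ε / 24)) + m * ((1 + ε / 16) * L) =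
      L * (ε / 16 - (2 + ε) * (m * (1 / 2 - ε / 24) - ε / 24) + m * (1 + ε / 16)) := by ring
  rw [this] at hfin
  have h5 : 0 ≤ ε / 16 - (2 + ε) * (m * (1 / 2 - ε / 24) - ε / 24) + m * (1 + ε / 16) :=
    nonneg_of_mul_nonneg_right hfin hL
  have h6 : (m : ℝ) * (1 / 2 - ε / 12) ≤ m * (1 / 2 - ε / 24) - ε / 24 := by nlinarith
  have h7 : (1 + ε / 4) ≤ (2 + ε) * (1 / 2 - ε / 12) := by nlinarith
  have h8 : m * (1 + ε / 4) ≤ (2 + ε) * (m * (1 / 2 - ε / 24) - ε / 24) := by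
    calc m * (1 + ε / 4) ≤ m * ((2 + ε) * (1 / 2 - ε / 12)) := by gcongr
      _ = (2 + ε) * (m * (1 / 2 - ε / 12)) := by ring
      _ ≤ _ := by gcongr
  nlinarith

theorem roth_int (α : ℝ) (hα : IsIntegral ℤ α) (ε : ℝ) (hε : 0 < ε) (hε1 : ε ≤ 1) :
    ¬ ∀ T : ℝ, ∃ (p : ℤ) (q : ℕ), (0 < q ∧ IsCoprime p (q : ℤ) ∧
      |α - (p : ℝ) / q| ≤ Real.exp (-(2 + ε) * Real.log q)) ∧ T ≤ Real.log q := by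
  intro H
  obtain ⟨d, B, hB, hd, haux⟩ := aux_poly α hα
  obtain ⟨m, hm, hdm⟩ : ∃ m : ℕ, 0 < m ∧ d * Real.exp (-2 * (ε / 24) ^ 2 * m) ≤ 1 / 2 := by
    have ht : Filter.Tendsto (fun m : ℕ => d * Real.exp (-(2 * (ε / 24) ^ 2 * (m : ℝ)))) Filter.atTop
        (nhds (d * 0)) := by
      refine Filter.Tendsto.const_mul _ (Real.tendsto_exp_neg_atTop_nhds_zero.comp ?_)
      exact tendsto_natCast_atTop_atTop.const_mul_atTop (by positivity)
    rw [mul_zero] at ht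
    obtain ⟨m, h1, h2⟩ := ((ht.eventually (gt_mem_nhds (by norm_num : (0 : ℝ) < 1 / 2))).and
      (Filter.eventually_gt_atTop 0)).exists
    refine ⟨m, h2, ?_⟩
    rw [show -2 * (ε / 24) ^ 2 * (m : ℝ) = -(2 * (ε / 24) ^ 2 * (m : ℝ)) by ring]
    exact h1.le
  have hm1 : (1 : ℝ) ≤ m := by exact_mod_cast hm
  obtain ⟨ω, hω, hroth⟩ := roth_lemma m (ε / 24) (by positivity)
  set C : ℝ := (1 + |α|) * (2 * B) with hCdef
  have hBC : B ≤ C := by rw [hCdef]; nlinarith [abs_nonneg α]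
  have hC : 1 ≤ C := hB.trans hBC
  have hlC : 0 ≤ Real.log C := Real.log_nonneg hC
  obtain ⟨ω₂, hω₂, hω₂a, hω₂b, hω₂c⟩ : ∃ ω₂ : ℝ, 0 < ω₂ ∧ ω₂ ≤ ω ∧ m * ω₂ * Real.log C ≤ ω ∧
      m * ω₂ * Real.log C ≤ ε / 16 := by
    have hden : (0 : ℝ) < m * (1 + Real.log C) := by positivity
    have hmin : 0 < min ω (ε / 16) := lt_min hω (by positivity)
    have e : m * (min ω (ε / 16) / (m * (1 + Real.log C))) * (1 + Real.log C) = min ω (ε / 16) := by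
      have : (1 + Real.log C) ≠ 0 := by positivity
      have : (m : ℝ) ≠ 0 := by positivity
      field_simp
    have h1 : m * (min ω (ε / 16) / (m * (1 + Real.log C))) * Real.log C ≤ min ω (ε / 16) := by
      refine le_trans ?_ e.le
      gcongr
      linarith
    refine ⟨min ω (ε / 16) / (m * (1 + Real.log C)), by positivity, ?_, h1.trans (min_le_left _ _),
      h1.trans (min_le_right _ _)⟩
    refine (div_le_self hmin.le ?_).trans (min_le_left _ _)
    nlinarith
  obtain ⟨p', q', hG, hT, hmono, hgap⟩ := seq_exists _ H (2 / ω₂) (max (2 / ω) 1) (by positivity)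
    (le_max_right _ _)
  have hmono' : Monotone fun k => Real.log (q' k) := monotone_nat_of_le_succ hmono
  have hlogpos' : ∀ k, 0 < Real.log (q' k) := fun k => lt_of_lt_of_le (by positivity) (hT k)
  set L := Real.log (q' m) / (ε / 16) with hLdef
  have hL : 0 < L := div_pos (hlogpos' m) (by positivity)
  have hLη : ∀ k ≤ m, Real.log (q' k) ≤ (ε / 16) * L := by
    intro k hk
    have : (ε / 16) * L = Real.log (q' m) := by rw [hLdef]; field_simp
    rw [this]; exact hmono' hk
  let ρ : Fin m → ℕ := fun j => m - 1 - j
  let p : Fin m → ℤ := fun j => p' (ρ j)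
  let q : Fin m → ℕ := fun j => q' (ρ j)
  let r : Fin m → ℕ := fun j => ⌈L / Real.log (q j)⌉₊
  have hlogpos : ∀ j, 0 < Real.log (q j) := fun j => hlogpos' _
  have hrlow : ∀ j, L / Real.log (q j) ≤ r j := fun j => Nat.le_ceil _
  have hrup : ∀ j, (r j : ℝ) < L / Real.log (q j) + 1 := fun j =>
    Nat.ceil_lt_add_one (div_pos hL (hlogpos j)).le
  have h1 : ∀ j, L ≤ r j * Real.log (q j) := fun j => by
    have := hrlow j
    rwa [div_le_iff₀ (hlogpos j)] at this
  have h2 : ∀ j, r j * Real.log (q j) ≤ (1 + ε / 16) * L := fun j => by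
    have a := mul_le_mul_of_nonneg_right (hrup j).le (hlogpos j).le
    rw [add_mul, div_mul_cancel₀ _ (hlogpos j).ne', one_mul] at a
    have b := hLη (ρ j) (by simp only [ρ]; omega)
    linarith
  have h3 : ∀ j, (r j : ℝ) ≤ 2 * L / Real.log (q j) := fun j => by
    rw [le_div_iff₀ (hlogpos j)]
    refine (h2 j).trans ?_
    nlinarith
  have hr0 : ∀ j, 0 < r j := fun j => Nat.ceil_pos.2 (div_pos hL (hlogpos j))
  have h4 : ∀ j, (r j : ℝ) ≤ ω₂ * L := fun j => by
    refine (h3 j).trans ?_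
    rw [div_le_iff₀ (hlogpos j)]
    have := hT (ρ j)
    rw [div_le_iff₀ hω₂] at this
    change 2 ≤ Real.log (q j) * ω₂ at this
    nlinarith
  have h5 : ∀ i j, i < j → (r i : ℝ) ≤ ω * r j := fun i j hij => by
    have g := hgap (ρ j) (ρ i) (by
      simp only [ρ]
      have := i.2; have := j.2
      have : (i : ℕ) < j := hij
      omega)
    have g2 : 2 / ω * Real.log (q j) ≤ Real.log (q i) :=
      le_trans (mul_le_mul_of_nonneg_right (le_max_left _ _) (hlogpos j).le) g
    calc (r i : ℝ) ≤ 2 * L / Real.log (q i) := h3 i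
      _ ≤ 2 * L / (2 / ω * Real.log (q j)) := by
          have := hlogpos j
          gcongr
      _ = ω * (L / Real.log (q j)) := by
          have := (hlogpos j).ne'
          field_simp
      _ ≤ _ := by gcongr; exact hrlow j
  obtain ⟨P, hP0, hPdeg, hPlen, hPidx⟩ := haux m (ε / 24) hm (by positivity) (by linarith) hdm r hr0
  have hmapdeg : ∀ j, degreeOf j (map icr P) ≤ r j := fun j =>
      le_trans (degreeOf_le_iff.2 fun K hK => by
        have := support_map_subset icr P hK
        exact degreeOf_le_iff.1 le_rfl K this) (hPdeg j)
  have hPexp : rlen (map icr P) ≤ Real.exp (ω * L) := by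
    refine hPlen.trans ((pow_le_pow_left₀ (by linarith) hBC _).trans ?_)
    have e : C ^ (∑ j, r j) = Real.exp ((∑ j, r j : ℕ) * Real.log C) := by
      rw [Real.exp_nat_mul, Real.exp_log (by linarith)]
    rw [e]
    apply Real.exp_le_exp.2
    calc ((∑ j, r j : ℕ) : ℝ) * Real.log C ≤ (m * (ω₂ * L)) * Real.log C := by
          gcongr
          push_cast
          refine (Finset.sum_le_sum fun j _ => h4 j).trans ?_
          simp
      _ = (m * ω₂ * Real.log C) * L := by ring
      _ ≤ _ := by gcongr
  have hn := hroth r p q L P hL h1 (fun j => (hG _).2.1)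
    (fun j => (h4 j).trans (by gcongr)) h5 hP0 hPdeg hPexp
  refine roth_core α ε hε hε1 m hm ω₂ C L hC hω₂c hL r p q (fun j => (hG _).1) h4 hr0 h1 h2
    (fun j => (hG _).2.2) P hPdeg ?_ hPidx hn
  intro I
  refine (rlen_rsh (fun _ => α) |α| (fun _ => le_rfl) (abs_nonneg _) _ r
    fun j => (degreeOf_rhd _ _ _).trans (hmapdeg j)).trans ?_
  rw [hCdef, mul_pow, mul_pow]
  gcongr
  refine (rlen_rhd _ _ r hmapdeg).trans ?_
  gcongr

end

theorem irr_gap (α : ℝ) (hα : Irrational α) (M : ℕ) :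
    ∃ c > (0 : ℝ), ∀ (p : ℤ) (q : ℕ), 0 < q → q ≤ M → c ≤ |α - (p : ℝ) / q| := by
  have hf : (0 : ℝ) < M.factorial := by exact_mod_cast M.factorial_pos
  have hirr : Irrational (α * M.factorial) := hα.mul_natCast M.factorial_ne_zero
  refine ⟨|α * M.factorial - round (α * M.factorial)| / M.factorial, ?_, ?_⟩
  · refine div_pos (abs_pos.2 (sub_ne_zero.2 ?_)) hf
    exact hirr.ne_int _
  · intro p q hq hqM
    obtain ⟨k, hk⟩ := Nat.dvd_factorial hq hqM
    have hq' : (q : ℝ) ≠ 0 := by exact_mod_cast hq.ne'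
    have e : |α * M.factorial - ((p * k : ℤ) : ℝ)| = |α - (p : ℝ) / q| * M.factorial := by
      rw [← abs_of_pos hf, ← abs_mul, abs_of_pos hf, sub_mul, hk]
      congr 2
      push_cast; field_simp
    rw [div_le_iff₀ hf, ← e]
    exact round_le _ _

/-- Roth's theorem implies that the partial quotients of an algebraic irrational
grow slower than any power of the denominators: b_{n+1} ≤ C_ε · q_n^ε. -/
theorem partial_quotients_subpolynomial_of_algebraic (a : ℝ)
    (hirr : Irrational a) (halg : IsAlgebraic ℚ a)
    (p : ℕ → ℤ) (q b : ℕ → ℕ)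
    (hq : ∀ n, 0 < q n) (hb : ∀ n, 0 < b n)
    (hconv : ∀ n, |a - (p n : ℝ) / (q n : ℝ)| < 1 / ((q n : ℝ) * (q (n + 1) : ℝ)))
    (hqb : ∀ n, b (n + 1) * q n ≤ q (n + 1)) :
    ∀ ε > (0 : ℝ), ∃ C > (0 : ℝ), ∀ n, (b (n + 1) : ℝ) ≤ C * (q n : ℝ) ^ ε := by
  intro ε₀ hε₀
  by_contra hcon
  push Not at hcon
  obtain ⟨ε, hε, hε1, hεε⟩ : ∃ ε : ℝ, 0 < ε ∧ ε ≤ 1 ∧ ε ≤ ε₀ :=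
    ⟨min ε₀ 1, lt_min hε₀ one_pos, min_le_right _ _, min_le_left _ _⟩
  have halgZ : IsAlgebraic ℤ a := (IsFractionRing.isAlgebraic_iff ℤ ℚ ℝ).2 halg
  obtain ⟨N, hN, hint⟩ := halgZ.exists_integral_multiple
  rw [zsmul_eq_mul] at hint
  have hirrN : Irrational ((N : ℝ) * a) := hirr.intCast_mul hN
  have hNpos : (0 : ℝ) < |(N : ℝ)| := abs_pos.2 (by exact_mod_cast hN)
  refine roth_int _ hint ε hε hε1 fun T => ?_
  obtain ⟨c, hc, hgap⟩ := irr_gap _ hirrN ⌈Real.exp T⌉₊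
  set C := |(N : ℝ)| + |(N : ℝ)| / c with hC
  have hCpos : 0 < C := by positivity
  obtain ⟨n, hn⟩ := hcon C hCpos
  have hqn : (1 : ℝ) ≤ q n := by exact_mod_cast hq n
  have hbn : (0 : ℝ) < b (n + 1) := by exact_mod_cast hb _
  have hb' : C * (q n : ℝ) ^ ε < b (n + 1) :=
    lt_of_le_of_lt (mul_le_mul_of_nonneg_left (Real.rpow_le_rpow_of_exponent_le hqn hεε) hCpos.le) hn
  have hpw : (0 : ℝ) < (q n : ℝ) ^ ε := by positivity
  have happ : |a - (p n : ℝ) / q n| < 1 / (C * ((q n : ℝ) ^ ε * (q n) ^ 2)) := by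
    refine (hconv n).trans_le ?_
    have h1 : (b (n + 1) : ℝ) * q n ≤ q (n + 1) := by exact_mod_cast hqb n
    apply one_div_le_one_div_of_le (by positivity)
    calc C * ((q n : ℝ) ^ ε * (q n) ^ 2) = (C * (q n : ℝ) ^ ε) * q n * q n := by ring
      _ ≤ b (n + 1) * q n * q n := by gcongr
      _ ≤ q (n + 1) * q n := by gcongr
      _ = _ := mul_comm _ _
  set x : ℚ := ((N * p n : ℤ) : ℚ) / ((q n : ℤ) : ℚ) with hx
  have hxR : (x.num : ℝ) / x.den = N * ((p n : ℝ) / q n) := by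
    have : ((x : ℚ) : ℝ) = N * ((p n : ℝ) / q n) := by
      rw [hx]; push_cast; ring
    rw [← this]
    conv_rhs => rw [← Rat.num_div_den x]
    push_cast; rfl
  have hden : (x.den : ℝ) ≤ q n := by
    have h1 : (x.den : ℤ) ∣ (q n : ℤ) := by
      rw [hx, ← Rat.divInt_eq_div]; exact Rat.den_dvd _ _
    have h2 := Nat.le_of_dvd (hq n) (Int.natCast_dvd_natCast.1 h1)
    exact_mod_cast h2
  have hden1 : (1 : ℝ) ≤ x.den := by exact_mod_cast x.den_pos
  have happ2 : |N * a - (x.num : ℝ) / x.den| < |(N : ℝ)| / (C * ((q n : ℝ) ^ ε * (q n) ^ 2)) := by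
    rw [hxR, ← mul_sub, abs_mul]
    exact (mul_lt_mul_of_pos_left happ hNpos).trans_eq (mul_one_div _ _)
  have hbig : 1 ≤ (q n : ℝ) ^ ε * (q n) ^ 2 :=
    one_le_mul_of_one_le_of_one_le (Real.one_le_rpow hqn hε.le) (one_le_pow₀ hqn)
  refine ⟨x.num, x.den, ⟨x.den_pos, Rat.isCoprime_num_den x, ?_⟩, ?_⟩
  · refine happ2.le.trans ?_
    have e : Real.exp (-(2 + ε) * Real.log x.den) = 1 / ((x.den : ℝ) ^ ε * x.den ^ 2) := by
      have hd0 : (0 : ℝ) < x.den := by linarith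
      rw [← Real.rpow_natCast, ← Real.rpow_add hd0, one_div, ← Real.rpow_neg hd0.le,
        Real.rpow_def_of_pos hd0]
      congr 1; push_cast; ring
    rw [e, div_le_div_iff₀ (by positivity) (by positivity), one_mul]
    have hNC : |(N : ℝ)| ≤ C := by
      rw [hC]; have : 0 ≤ |(N : ℝ)| / c := by positivity
      linarith
    gcongr
  · by_contra hlt
    push Not at hlt
    have h1 : (x.den : ℝ) < Real.exp T := by
      rwa [Real.log_lt_iff_lt_exp (by linarith)] at hlt
    have h2 : x.den ≤ ⌈Real.exp T⌉₊ := by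
      have := h1.le.trans (Nat.le_ceil _)
      exact_mod_cast this
    have h3 := hgap x.num x.den x.den_pos h2
    have h4 := h3.trans_lt happ2
    rw [lt_div_iff₀ (by positivity)] at h4
    have h5 : |(N : ℝ)| < c * C := by
      rw [hC, mul_add, mul_div_cancel₀ _ hc.ne']
      have : 0 < c * |(N : ℝ)| := by positivity
      linarith
    have h6 : c * C ≤ c * (C * ((q n : ℝ) ^ ε * (q n) ^ 2)) := by
      gcongr
      exact le_mul_of_one_le_right hCpos.le hbig
    linarith
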